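/- arXiv:1709.08158 — 3 statements merged into one kernel-verified Lean document; each statement's English description precedes it below -/
import Mathlib

section
/- For every d ≥ 2 there is a constant C(d) > 0 (depending only on d) such that: for all v ∈ ℕ_0 and u ∈ ℝ_+^d with 2^v · pr(u,d) ≤ 1, one has σ(v,u) ≤ C(d) · 2^v pr(u,d) · (log(2/(2^v pr(u,d))))^{d-1}, where log denotes the logarithm to base 2. -/
/-!
Put `x_j = log₂ (2 ^ s_j * u_j)`, `P = 2 ^ v * ∏ u_j` and `L = -log₂ P ≥ 0`, so that
`∑ x_j = -L` for every `s` in the sum. Since `min (2 ^ x) (2 ^ (-x)) = 2 ^ (x - 2 * max x 0)`, each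
summand equals `P * 2 ^ (-2 * T)`, where `T = ∑ max x_j 0`.

The point is that `T` dominates the distance of *every* `x_j` from the interval `[-L, 0]`: clearly
`x_j ≤ T`, and `-L - x_j = ∑_{i ≠ j} x_i ≤ T`. Averaging these bounds over `d - 1` of the coordinates
gives `2 ^ (-2 * T) ≤ ∏ q ^ dist (x_j, [-L, 0])` with `q = 2 ^ (-2 / (d - 1))`
(`summand_le`). As `d - 1` coordinates determine `s`, the sum over `s` is at most a product of `d - 1`
one-dimensional sums (`sum_antidiagonalTuple_le`), and each of those is at most `K * (1 + L)`:
about `L + 1` points lie in the interval, and the rest contribute geometric series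
(`sum_dist_le`).
-/

namespace SigmaBound

/-- The distance from `y` to the interval `[-L, 0]`, for `0 ≤ L`. -/
noncomputable def intervalDist (L y : ℝ) : ℝ := max 0 (max y (-L - y))

/-- A geometric series bounds any finite sum of powers `q ^ e n` with distinct exponents. -/
lemma sum_pow_le {ι : Type*} {q : ℝ} (h0 : 0 < q) (h1 : q < 1) (A : Finset ι) (e : ι → ℕ)
    (he : Set.InjOn e A) : ∑ n ∈ A, q ^ e n ≤ (1 - q)⁻¹ := by
  classical
  rw [← Finset.sum_image (f := fun m => q ^ m) he, ← tsum_geometric_of_lt_one h0.le h1]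
  exact (summable_geometric_of_lt_one h0.le h1).sum_le_tsum _ (fun i _ => by positivity)

/-- The sum of `2 ^ (-c * dist)` over points of a translate of `ℕ` grows at most linearly in the
length of the interval, uniformly in the translation `a`. -/
lemma sum_dist_le {c : ℝ} (hc : 0 < c) :
    ∃ K : ℝ, 0 < K ∧ ∀ (L a : ℝ) (A : Finset ℕ), 0 ≤ L →
      ∑ n ∈ A, (2 : ℝ) ^ (-c * intervalDist L (n + a)) ≤ K * (1 + L) := by
  set q : ℝ := (2 : ℝ) ^ (-c) with hq
  have h0 : 0 < q := by positivity
  have h1 : q < 1 := Real.rpow_lt_one_of_one_lt_of_neg (by norm_num) (by linarith)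
  have hpos : 0 < (1 - q)⁻¹ := inv_pos.2 (by linarith)
  refine ⟨3 + 2 * (1 - q)⁻¹, by positivity, fun L a A hL => ?_⟩
  set M : ℤ := ⌈L⌉ + 1 with hM
  have hML : (M : ℝ) < L + 2 := by
    have := Int.ceil_lt_add_one L
    push_cast [hM]; linarith
  have hM0 : 0 ≤ M := by
    have : 0 ≤ ⌈L⌉ := Int.ceil_nonneg hL
    omega
  set b : ℤ := ⌊a⌋ with hb
  -- Rounding `n + a` down to `n + b` costs at most one unit at the left end, whence the `+ 1` in `M`.
  have key : ∀ n ∈ A, (2 : ℝ) ^ (-c * intervalDist L (n + a)) ≤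
      (if (n : ℤ) + b ∈ Finset.Icc (-M) 0 then 1 else 0)
      + (if 0 ≤ (n : ℤ) + b then q ^ ((n : ℤ) + b).toNat else 0)
      + (if (n : ℤ) + b ≤ -M then q ^ (-M - (n + b)).toNat else 0) := by
    intro n _
    have hf1 := Int.floor_le a
    have hf2 := Int.lt_floor_add_one a
    have hLc := Int.le_ceil L
    have hle : ∀ m : ℤ, 0 ≤ m → (m : ℝ) ≤ intervalDist L (n + a) →
        (2 : ℝ) ^ (-c * intervalDist L (n + a)) ≤ q ^ m.toNat := by
      intro m hm hmd
      have hm' : ((m.toNat : ℕ) : ℝ) = m := by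
        exact_mod_cast congrArg (Int.cast (R := ℝ)) (Int.toNat_of_nonneg hm)
      rw [hq, ← Real.rpow_natCast, ← Real.rpow_mul (by norm_num), hm']
      apply Real.rpow_le_rpow_of_exponent_le (by norm_num)
      nlinarith
    have hA : (0 : ℝ) ≤ if (n : ℤ) + b ∈ Finset.Icc (-M) 0 then 1 else 0 := by
      split_ifs <;> norm_num
    have hB : (0 : ℝ) ≤ if 0 ≤ (n : ℤ) + b then q ^ ((n : ℤ) + b).toNat else 0 := by
      split_ifs <;> positivity
    have hC : (0 : ℝ) ≤ if (n : ℤ) + b ≤ -M then q ^ (-M - (n + b)).toNat else 0 := by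
      split_ifs <;> positivity
    by_cases hx : 0 ≤ (n : ℤ) + b
    · have := hle _ hx (by
        refine le_trans ?_ ((le_max_left _ _).trans (le_max_right _ _))
        push_cast; linarith)
      rw [if_pos hx] at hB ⊢
      linarith
    by_cases hy : (n : ℤ) + b ≤ -M
    · have := hle (-M - (n + b)) (by omega) (by
        refine le_trans ?_ ((le_max_right _ _).trans (le_max_right _ _))
        push_cast [hM]; linarith)
      rw [if_pos hy] at hC ⊢
      linarith
    · have := hle 0 le_rfl (by simp [intervalDist])
      rw [if_pos (by rw [Finset.mem_Icc]; omega)]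
      simp only [Int.toNat_zero, pow_zero] at this
      linarith
  refine (Finset.sum_le_sum key).trans ?_
  rw [Finset.sum_add_distrib, Finset.sum_add_distrib, ← Finset.sum_filter, ← Finset.sum_filter,
    ← Finset.sum_filter]
  have s1 : ∑ n ∈ A.filter (fun n : ℕ => (n : ℤ) + b ∈ Finset.Icc (-M) 0), (1 : ℝ) ≤ M + 1 := by
    rw [Finset.sum_const, nsmul_eq_mul, mul_one]
    have hcard : (A.filter (fun n : ℕ => (n : ℤ) + b ∈ Finset.Icc (-M) 0)).card
        ≤ (Finset.Icc (-M) 0).card := by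
      apply Finset.card_le_card_of_injOn (fun n : ℕ => (n : ℤ) + b)
      · intro n hn
        exact (Finset.mem_filter.1 hn).2
      · intro n _ m _ h
        simp only at h
        omega
    rw [Int.card_Icc] at hcard
    have h' : ((A.filter (fun n : ℕ => (n : ℤ) + b ∈ Finset.Icc (-M) 0)).card : ℤ) ≤ M + 1 := by
      omega
    exact_mod_cast h'
  have s2 := sum_pow_le h0 h1 (A.filter (fun n : ℕ => 0 ≤ (n : ℤ) + b))
    (fun n => ((n : ℤ) + b).toNat) (by
      intro n hn m hm h
      have h3 := (Finset.mem_filter.1 hn).2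
      have h4 := (Finset.mem_filter.1 hm).2
      simp only at h
      omega)
  have s3 := sum_pow_le h0 h1 (A.filter (fun n : ℕ => (n : ℤ) + b ≤ -M))
    (fun n => (-M - ((n : ℤ) + b)).toNat) (by
      intro n hn m hm h
      have h3 := (Finset.mem_filter.1 hn).2
      have h4 := (Finset.mem_filter.1 hm).2
      simp only at h
      omega)
  nlinarith [mul_nonneg hpos.le hL]

/-- The tail of a tuple determines its head once the sum is fixed, so a sum over tuples of a
product over the tail is bounded by a product of sums. -/
lemma sum_antidiagonalTuple_le (k v : ℕ) (f : Fin k → ℕ → ℝ) (hf : ∀ j n, 0 ≤ f j n) :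
    ∑ s ∈ Finset.Nat.antidiagonalTuple (k + 1) v, ∏ j : Fin k, f j (s j.succ) ≤
      ∏ j : Fin k, ∑ n ∈ Finset.range (v + 1), f j n := by
  classical
  rw [Finset.prod_univ_sum]
  have hinj : Set.InjOn (fun s : Fin (k + 1) → ℕ => fun j : Fin k => s j.succ)
      (Finset.Nat.antidiagonalTuple (k + 1) v : Finset (Fin (k + 1) → ℕ)) := by
    intro s hs t ht h
    rw [Finset.mem_coe, Finset.Nat.mem_antidiagonalTuple, Fin.sum_univ_succ] at hs ht
    have h' : ∀ j : Fin k, s j.succ = t j.succ := fun j => congrFun h j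
    simp only [h'] at hs
    funext i
    refine Fin.cases ?_ h' i
    omega
  rw [← Finset.sum_image (f := fun p : Fin k → ℕ => ∏ j, f j (p j)) hinj]
  apply Finset.sum_le_sum_of_subset_of_nonneg
  · intro p hp
    obtain ⟨s, hs, rfl⟩ := Finset.mem_image.1 hp
    rw [Finset.Nat.mem_antidiagonalTuple] at hs
    rw [Fintype.mem_piFinset]
    intro j
    have := Finset.single_le_sum (f := s) (fun i _ => Nat.zero_le _) (Finset.mem_univ j.succ)
    rw [Finset.mem_range]
    omega
  · intro p _ _
    exact Finset.prod_nonneg fun j _ => hf _ _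

lemma min_two_rpow (x : ℝ) :
    min ((2 : ℝ) ^ x) (1 / (2 : ℝ) ^ x) = (2 : ℝ) ^ (x - 2 * max x 0) := by
  rw [one_div, ← Real.rpow_neg (by norm_num)]
  rcases le_total x 0 with h | h
  · rw [max_eq_right h, min_eq_left]
    · simp
    · exact Real.rpow_le_rpow_of_exponent_le (by norm_num) (by linarith)
  · rw [max_eq_left h, min_eq_right]
    · congr 1; ring
    · exact Real.rpow_le_rpow_of_exponent_le (by norm_num) (by linarith)

/-- The summand bound in logarithmic coordinates: the total positive part of `x` dominates the
distance `intervalDist L` of each coordinate, hence also the average of these distances over the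
tail. -/
lemma summand_le {k : ℕ} (hk : 0 < k) (L : ℝ) (x : Fin (k + 1) → ℝ)
    (hx : ∑ j, x j = -L) :
    ∏ j, min ((2 : ℝ) ^ x j) (1 / (2 : ℝ) ^ x j) ≤
      (2 : ℝ) ^ (-L) * ∏ j : Fin k, (2 : ℝ) ^ (-(2 / k : ℝ) * intervalDist L (x j.succ)) := by
  simp only [min_two_rpow]
  rw [← Real.rpow_sum_of_pos (by norm_num), ← Real.rpow_sum_of_pos (by norm_num),
    ← Real.rpow_add (by norm_num)]
  apply Real.rpow_le_rpow_of_exponent_le (by norm_num)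
  rw [Finset.sum_sub_distrib, hx, ← Finset.mul_sum, ← Finset.mul_sum]
  set T := ∑ j, max (x j) 0 with hT
  have hdist : ∀ j, intervalDist L (x j) ≤ T := by
    intro j
    have h1 : max (x j) 0 ≤ T :=
      Finset.single_le_sum (f := fun j => max (x j) 0) (fun i _ => le_max_right _ _)
        (Finset.mem_univ j)
    have h2 : max (x j) 0 - x j ≤ ∑ i, (max (x i) 0 - x i) :=
      Finset.single_le_sum (f := fun j => max (x j) 0 - x j)
        (fun i _ => sub_nonneg.2 (le_max_left _ _)) (Finset.mem_univ j)
    rw [Finset.sum_sub_distrib, hx] at h2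
    have h3 := le_max_left (x j) 0
    have h4 := le_max_right (x j) 0
    exact max_le (by linarith) (max_le (by linarith) (by linarith))
  have hsum : ∑ j : Fin k, intervalDist L (x j.succ) ≤ k * T := by
    refine (Finset.sum_le_sum fun j _ => hdist (Fin.succ j)).trans ?_
    simp
  have hk' : (0 : ℝ) < k := by exact_mod_cast hk
  have : (2 / k : ℝ) * ∑ j : Fin k, intervalDist L (x j.succ) ≤ 2 * T := by
    calc _ ≤ (2 / k : ℝ) * (k * T) := by gcongr
      _ = 2 * T := by field_simp
  linarith

end SigmaBound

open SigmaBound in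
/-- For every `d ≥ 2` there is a constant `C(d) > 0` such that for all `v ∈ ℕ₀` and
`u ∈ ℝ₊^d` with `2^v · pr(u,d) ≤ 1` one has
`σ(v,u) = Σ_{‖s‖₁=v} ∏_j min(2^{s_j}u_j, 1/(2^{s_j}u_j))
  ≤ C(d) · 2^v pr(u,d) · (log₂(2/(2^v pr(u,d))))^{d-1}`. -/
theorem sigma_bound_small_volume (d : ℕ) (hd : 2 ≤ d) :
    ∃ C : ℝ, 0 < C ∧ ∀ v : ℕ, ∀ u : Fin d → ℝ, (∀ j, 0 < u j) →
      (2 : ℝ) ^ v * ∏ j, u j ≤ 1 →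
      ∑ s ∈ Finset.Nat.antidiagonalTuple d v,
          ∏ j, min ((2 : ℝ) ^ s j * u j) (1 / ((2 : ℝ) ^ s j * u j)) ≤
        C * ((2 : ℝ) ^ v * ∏ j, u j) *
          Real.logb 2 (2 / ((2 : ℝ) ^ v * ∏ j, u j)) ^ (d - 1) := by
  obtain ⟨k, rfl⟩ : ∃ k, d = k + 1 := ⟨d - 1, by omega⟩
  have hk : 0 < k := by omega
  have hk' : (0 : ℝ) < k := by exact_mod_cast hk
  obtain ⟨K, hK, hsum⟩ := sum_dist_le (c := 2 / k) (by positivity)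
  refine ⟨K ^ k, by positivity, fun v u hu hP => ?_⟩
  have hprod : 0 < ∏ j, u j := Finset.prod_pos fun j _ => hu j
  set P : ℝ := (2 : ℝ) ^ v * ∏ j, u j with hPdef
  have hP0 : 0 < P := by positivity
  obtain ⟨L, hLdef⟩ : ∃ L, L = -Real.logb 2 P := ⟨_, rfl⟩
  have hL : 0 ≤ L := by
    rw [hLdef]
    exact neg_nonneg.2 (Real.logb_nonpos (by norm_num) hP0.le hP)
  have hPL : (2 : ℝ) ^ (-L) = P := by
    rw [hLdef, neg_neg, Real.rpow_logb (by norm_num) (by norm_num) hP0]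
  have hlog : Real.logb 2 (2 / P) = 1 + L := by
    rw [Real.logb_div (by norm_num) hP0.ne', Real.logb_self_eq_one (by norm_num), hLdef]
    ring
  rw [hlog, Nat.add_sub_cancel]
  have hterm : ∀ s ∈ Finset.Nat.antidiagonalTuple (k + 1) v,
      ∏ j, min ((2 : ℝ) ^ s j * u j) (1 / ((2 : ℝ) ^ s j * u j)) ≤
        P * ∏ j : Fin k, (2 : ℝ) ^
          (-(2 / k : ℝ) * intervalDist L (s j.succ + Real.logb 2 (u j.succ))) := by
    intro s hs
    rw [Finset.Nat.mem_antidiagonalTuple] at hs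
    have hpow : ∀ j, (2 : ℝ) ^ s j * u j = (2 : ℝ) ^ ((s j : ℝ) + Real.logb 2 (u j)) := by
      intro j
      rw [Real.rpow_add (by norm_num), Real.rpow_natCast,
        Real.rpow_logb (by norm_num) (by norm_num) (hu j)]
    simp only [hpow]
    rw [← hPL]
    refine summand_le hk L (fun j => (s j : ℝ) + Real.logb 2 (u j)) ?_
    rw [Finset.sum_add_distrib, ← Nat.cast_sum, hs, hLdef, neg_neg, hPdef,
      Real.logb_mul (by positivity) hprod.ne', Real.logb_pow, Real.logb_self_eq_one (by norm_num),
      mul_one, Real.logb_prod _ _ fun j _ => (hu j).ne']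
  refine (Finset.sum_le_sum hterm).trans ?_
  rw [← Finset.mul_sum, mul_comm (K ^ k) P, mul_assoc P, ← mul_pow]
  refine mul_le_mul_of_nonneg_left ?_ hP0.le
  refine (sum_antidiagonalTuple_le k v (fun j n => (2 : ℝ) ^
    (-(2 / k : ℝ) * intervalDist L (n + Real.logb 2 (u j.succ)))) ?_).trans ?_
  · intro j n; positivity
  · refine (Finset.prod_le_prod (fun j _ => Finset.sum_nonneg fun n _ => by positivity)
      (fun j _ => hsum L (Real.logb 2 (u j.succ)) (Finset.range (v + 1)) hL)).trans ?_
    simp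
end

section
/- Let d ≥ 2 and let A be a matrix with the Frolov lattice properties (1°) and (2°). There exist constants c(d,A) > 0 and C(d,A) > 0 such that for any V ≥ V_0 := c(d,A) a^{-d} and every axis-parallel box B = ∏_{j=1}^d [x_j^0 - u_j, x_j^0 + u_j) ⊆ [0,1)^d with vol(B) = V, the error of the Frolov cubature formula on the smooth hat function h_B satisfies |Φ(a,A)(h_B) - ∫_{ℝ^d} h_B(x) dx| ≤ C(d,A) a^{-2d} (log(2V/V_0))^{d-1}, where log denotes the logarithm to base 2. -/
/-!
Write `N = a^d ∏ u_j` (a constant multiple of `a^d V`) and `ĥ` for the Fourier transform of `h_B`.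

Poisson summation over `ℤ^d`, applied to `x ↦ h_B(a⁻¹ (A⁻¹)ᵀ x)`, turns the cubature sum into
`∑_m ĥ(a A m)`; the term `m = 0` is the integral, so the error is `∑_{m ≠ 0} ĥ(a A m)`. Poisson
summation (`hasSum_poisson`) is obtained from Mathlib's Fourier series on `UnitAddTorus` by
periodizing, and the linear change of variables is `fourierPi_comp_mulVec`.

The transform of the univariate hat function is at most `2u` and at most `1 / (u y²)`. Hence, if
`s ∈ ℕ^d` records the dyadic blocks `u_j |y_j| ≲ 2^{s_j}` containing the frequency `y`, then
`|ĥ(y)| ≤ 8^d (∏ u_j)² 4^{-|s|}` with `|s| = ∑ s_j` (`exists_dyadic_norm_fourier_le`).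

For `y = a A m` with `m ≠ 0`, property (1°) forces `N ≤ 2^{|s|}`, and property (2°) bounds the number
of such `m` in the block `s` by `(2^d + 1) 2^{|s|} / N`. There are at most `(n + 1)^{d-1}` blocks with
`|s| = n`, so the error is at most a constant times
`(∏ u_j)² / N · ∑_{2^n ≥ N} (n + 1)^{d-1} 2^{-n}`, which is
`O((∏ u_j)² / N² · (log₂ (2N))^{d-1})` (`exists_dyadic_bound`). Since `∏ u_j / N = a^{-d}`, this is
the claim, with `c = 2^d` so that `V ≥ V₀` means `N ≥ 1`. The same bound on finite partial sums
provides the summability that Poisson summation needs.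
-/

open Matrix MeasureTheory

/-- The univariate hat function: `h_u(t) = 1 - |t|/u` for `|t| ≤ u`, `0` otherwise. -/
noncomputable def hatFn (u t : ℝ) : ℝ := if |t| ≤ u then 1 - |t| / u else 0

/-- The smooth hat function `h_B` of the box `B = ∏_j [x⁰_j - u_j, x⁰_j + u_j)`:
`h_B(x) = (∏_j u_j) · ∏_j h_{u_j}(x_j - x⁰_j)`. -/
noncomputable def hatBox {d : ℕ} (x0 u : Fin d → ℝ) (x : Fin d → ℝ) : ℝ :=
  (∏ j, u j) * ∏ j, hatFn (u j) (x j - x0 j)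


/-! ### Poisson summation in several variables -/

/-- The Fourier transform on `ℝ^d`, normalised as `f̂(y) = ∫ e^{-2πi⟨y, x⟩} f(x) dx`, with the dot
product on `Fin d → ℝ` in place of the inner product of `EuclideanSpace`. -/
noncomputable def fourierPi {d : ℕ} (f : (Fin d → ℝ) → ℂ) (y : Fin d → ℝ) : ℂ :=
  ∫ x : Fin d → ℝ, Complex.exp (-2 * Real.pi * Complex.I * ((y ⬝ᵥ x : ℝ) : ℂ)) * f x

lemma intCast_pi_finite {d : ℕ} (R : ℝ) :
    {m : Fin d → ℤ | ∀ i, |(m i : ℝ)| ≤ R}.Finite := by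
  refine (Set.finite_Icc (fun _ : Fin d => -⌈R⌉) (fun _ => ⌈R⌉)).subset fun m hm => ?_
  simp only [Set.mem_ofPred_eq, abs_le] at hm
  refine ⟨fun i => ?_, fun i => ?_⟩
  · have h := (hm i).1
    have h' := Int.le_ceil R
    exact_mod_cast (by push_cast; linarith : ((-⌈R⌉ : ℤ) : ℝ) ≤ m i)
  · exact_mod_cast (hm i).2.trans (Int.le_ceil R)

/-- Only finitely many integer translates of a compactly supported function meet a given cube. -/
lemma translates_finite {d : ℕ} {f : (Fin d → ℝ) → ℂ} (hs : HasCompactSupport f) (r : ℝ) :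
    {m : Fin d → ℤ | ∃ x : Fin d → ℝ, (∀ i, |x i| ≤ r) ∧
      f (x + fun i => (m i : ℝ)) ≠ 0}.Finite := by
  obtain ⟨R, hR⟩ := hs.isCompact.isBounded.exists_norm_le
  refine (intCast_pi_finite (R + r)).subset ?_
  rintro m ⟨x, hx, hm⟩ i
  have h1 := (norm_le_pi_norm _ i).trans (hR _ (subset_tsupport f hm))
  simp only [Pi.add_apply, Real.norm_eq_abs] at h1
  have h2 := hx i
  have : (m i : ℝ) = (x i + m i) - x i := by ring
  rw [this]
  exact (abs_sub _ _).trans (by linarith)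

lemma continuous_periodization {d : ℕ} {f : (Fin d → ℝ) → ℂ} (hc : Continuous f)
    (hs : HasCompactSupport f) :
    Continuous fun x : Fin d → ℝ => ∑' m : Fin d → ℤ, f (x + fun i => (m i : ℝ)) := by
  have hlf : LocallyFinite fun m : Fin d → ℤ =>
      Function.support fun x : Fin d → ℝ => f (x + fun i => (m i : ℝ)) := by
    intro x
    refine ⟨Metric.ball x 1, Metric.ball_mem_nhds x one_pos,
      (translates_finite hs (‖x‖ + 1)).subset ?_⟩
    rintro m ⟨y, hy, hyx⟩
    refine ⟨y, fun i => ?_, hy⟩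
    have h1 : ‖y - x‖ < 1 := by simpa [dist_eq_norm] using hyx
    have h2 := norm_le_pi_norm y i
    have h3 : ‖y‖ ≤ ‖x‖ + ‖y - x‖ := by
      simpa using norm_add_le x (y - x)
    rw [Real.norm_eq_abs] at h2
    linarith
  have h := continuous_finsum
    (fun m : Fin d → ℤ => hc.comp (continuous_add_const fun i => (m i : ℝ))) hlf
  convert h using 2 with x
  rw [tsum_eq_finsum (hlf.point_finite x)]
  rfl

lemma exp_dot_int_shift {d : ℕ} (n m : Fin d → ℤ) (x : Fin d → ℝ) :
    Complex.exp (-2 * Real.pi * Complex.I *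
        (((fun i => (n i : ℝ)) ⬝ᵥ (x + fun i => (m i : ℝ)) : ℝ) : ℂ)) =
      Complex.exp (-2 * Real.pi * Complex.I * (((fun i => (n i : ℝ)) ⬝ᵥ x : ℝ) : ℂ)) := by
  rw [dotProduct_add, Complex.exp_eq_exp_iff_exists_int]
  refine ⟨-∑ i, n i * m i, ?_⟩
  simp only [dotProduct]
  push_cast
  ring

lemma mFourier_neg_coe {d : ℕ} (n : Fin d → ℤ) (x : Fin d → ℝ) :
    UnitAddTorus.mFourier (-n) (fun i => (x i : UnitAddCircle)) =
      Complex.exp (-2 * Real.pi * Complex.I * (((fun i => (n i : ℝ)) ⬝ᵥ x : ℝ) : ℂ)) := by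
  simp only [UnitAddTorus.mFourier, ContinuousMap.coe_mk, fourier_coe_apply, dotProduct]
  rw [← Complex.exp_sum]
  congr 1
  push_cast
  rw [Finset.mul_sum]
  refine Finset.sum_congr rfl fun i _ => ?_
  simp
  ring

/-- The half-open cubes `m + (0, 1]^d`, `m ∈ ℤ^d`, tile `ℝ^d`. -/
lemma integral_eq_tsum_cubes {d : ℕ} {g : (Fin d → ℝ) → ℂ} (hg : Integrable g) :
    ∫ x, g x = ∑' m : Fin d → ℤ,
      ∫ x in {x : Fin d → ℝ | ∀ i, x i ∈ Set.Ioc 0 1}, g (x + fun i => (m i : ℝ)) := by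
  set Q : (Fin d → ℤ) → Set (Fin d → ℝ) :=
    fun m => {x | ∀ i, x i ∈ Set.Ioc (m i : ℝ) (m i + 1)} with hQ
  have hmeas : ∀ m, MeasurableSet (Q m) := fun m =>
    MeasurableSet.univ_pi' fun i => measurableSet_Ioc
  have hdisj : Pairwise (Function.onFun Disjoint Q) := by
    intro m m' hne
    refine Set.disjoint_left.2 fun x hx hx' => hne (funext fun i => ?_)
    have h1 := hx i
    have h2 := hx' i
    have h3 : (m i : ℝ) < m' i + 1 := h1.1.trans_le h2.2
    have h4 : (m' i : ℝ) < m i + 1 := h2.1.trans_le h1.2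
    norm_cast at h3 h4
    omega
  have huniv : ⋃ m, Q m = Set.univ := by
    refine Set.eq_univ_of_forall fun x => Set.mem_iUnion.2 ⟨fun i => ⌈x i⌉ - 1, fun i => ?_⟩
    push_cast
    constructor
    · linarith [Int.ceil_lt_add_one (x i)]
    · linarith [Int.le_ceil (x i)]
  rw [← setIntegral_univ, ← huniv, integral_iUnion hmeas hdisj hg.integrableOn]
  refine tsum_congr fun m => ?_
  have hmp := measurePreserving_add_right (volume : Measure (Fin d → ℝ)) (fun i => (m i : ℝ))
  rw [← hmp.setIntegral_preimage_emb (measurableEmbedding_addRight _)]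
  congr 2
  ext x
  simp only [hQ, Set.mem_preimage, Set.mem_ofPred_eq, Pi.add_apply, Set.mem_Ioc]
  refine forall_congr' fun i => ?_
  constructor <;> rintro ⟨h1, h2⟩ <;> constructor <;> linarith

/-- **Poisson summation** over `ℤ^d` for a continuous compactly supported function whose transform is
summable over `ℤ^d`: the Fourier coefficients of the periodization of `f`, a continuous function on
the torus, are the values of `f̂` at integer points, and the Fourier series is evaluated at `0`. -/
theorem hasSum_poisson {d : ℕ} {f : (Fin d → ℝ) → ℂ} (hc : Continuous f)
    (hs : HasCompactSupport f)
    (hsum : Summable fun n : Fin d → ℤ => fourierPi f fun i => (n i : ℝ)) :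
    HasSum (fun n : Fin d → ℤ => fourierPi f fun i => (n i : ℝ))
      (∑' m : Fin d → ℤ, f fun i => (m i : ℝ)) := by
  simp only [fourierPi] at hsum ⊢
  set P : (Fin d → ℝ) → ℂ := fun x => ∑' m : Fin d → ℤ, f (x + fun i => (m i : ℝ)) with hP
  set π : (Fin d → ℝ) → UnitAddTorus (Fin d) := fun x i => (x i : UnitAddCircle)
  have hq : IsOpenQuotientMap π :=
    IsOpenQuotientMap.piMap fun _ => QuotientAddGroup.isOpenQuotientMap_mk
  have hfact : ∀ x y : Fin d → ℝ, π x = π y → P x = P y := by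
    intro x y hxy
    have : ∀ i, ∃ k : ℤ, y i = x i + k := by
      intro i
      have h : ((y i - x i : ℝ) : UnitAddCircle) = 0 := by
        rw [AddCircle.coe_sub, sub_eq_zero]
        exact (congrFun hxy i).symm
      obtain ⟨k, hk⟩ := (AddCircle.coe_eq_zero_iff _).1 h
      refine ⟨k, ?_⟩
      rw [zsmul_one] at hk
      linarith
    choose k hk using this
    simp only [hP]
    rw [← (Equiv.addLeft k).tsum_eq (fun m : Fin d → ℤ => f (x + fun i => (m i : ℝ)))]
    refine tsum_congr fun m => congrArg f (funext fun i => ?_)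
    simp [hk i, add_assoc]
  let G : C(UnitAddTorus (Fin d), ℂ) :=
    hq.isQuotientMap.lift (f := ⟨π, hq.continuous⟩) ⟨P, continuous_periodization hc hs⟩ hfact
  have hG : ∀ x : Fin d → ℝ, G (fun i => (x i : UnitAddCircle)) = P x := fun x =>
    DFunLike.congr_fun (hq.isQuotientMap.lift_comp (f := ⟨π, hq.continuous⟩)
      ⟨P, continuous_periodization hc hs⟩ hfact) x
  have hcoef : UnitAddTorus.mFourierCoeff G = fun n : Fin d → ℤ => ∫ x : Fin d → ℝ,
      Complex.exp (-2 * Real.pi * Complex.I * (((fun i => (n i : ℝ)) ⬝ᵥ x : ℝ) : ℂ)) * f x := by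
    funext n
    set e : (Fin d → ℝ) → ℂ := fun x =>
      Complex.exp (-2 * Real.pi * Complex.I * (((fun i => (n i : ℝ)) ⬝ᵥ x : ℝ) : ℂ)) with he
    have hec : Continuous e := by
      simp only [he, dotProduct]
      fun_prop
    have hint : Integrable fun x => e x * f x :=
      (hec.mul hc).integrable_of_hasCompactSupport hs.mul_left
    rw [UnitAddTorus.mFourierCoeff_eq_integral _ n 0, integral_eq_tsum_cubes hint]
    -- Only the translates in `S` meet the unit cube, so that on it the periodization is a finite
    -- sum, which may be interchanged with the integral.
    set S := (translates_finite hs 1).toFinset with hS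
    have hzero : ∀ x : Fin d → ℝ, (∀ i, x i ∈ Set.Ioc (0 : ℝ) 1) → ∀ m ∉ S,
        f (x + fun i => (m i : ℝ)) = 0 := by
      intro x hx m hm
      by_contra h
      refine hm ((Set.Finite.mem_toFinset _).2 ⟨x, fun i => ?_, h⟩)
      rw [abs_of_pos (hx i).1]
      exact (hx i).2
    have hmeas : MeasurableSet {x : Fin d → ℝ | ∀ i, x i ∈ Set.Ioc (0 : ℝ) 1} :=
      MeasurableSet.univ_pi' fun i => measurableSet_Ioc
    rw [tsum_eq_sum (s := S), ← integral_finsetSum]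
    · simp only [Pi.zero_apply, zero_add]
      refine setIntegral_congr_fun hmeas fun x hx => ?_
      simp only [mFourier_neg_coe, hG, smul_eq_mul, hP]
      rw [tsum_eq_sum (fun m hm => hzero x hx m hm), Finset.mul_sum]
      refine Finset.sum_congr rfl fun m _ => ?_
      simp only [he]
      rw [exp_dot_int_shift]
    · intro m _
      exact (hint.comp_add_right _).integrableOn
    · intro m hm
      refine (setIntegral_congr_fun hmeas fun x hx => ?_).trans (integral_zero _ _)
      simp [hzero x hx m hm]
  have h := UnitAddTorus.hasSum_mFourier_series_apply_of_summable (f := G)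
    (by rw [hcoef]; exact hsum) (fun i => ((0 : ℝ) : UnitAddCircle))
  rw [hG (fun _ => 0), hcoef] at h
  convert h using 1
  · funext n
    have := mFourier_neg_coe (-n) (fun _ => 0)
    rw [neg_neg] at this
    rw [this]
    simp [dotProduct]
  · simp only [hP]
    refine tsum_congr fun m => congrArg f (funext fun i => ?_)
    simp

/-- The transform of `f ∘ M` at `Mᵀ y`. For `M = a⁻¹ (A⁻¹)ᵀ` and `y = a A m` one has `Mᵀ y = m`, so
integer frequencies become points of the scaled lattice `a A ℤ^d`. -/
lemma fourierPi_comp_mulVec {d : ℕ} {f : (Fin d → ℝ) → ℂ} (hf : Continuous f)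
    {M : Matrix (Fin d) (Fin d) ℝ} (hM : M.det ≠ 0) (y : Fin d → ℝ) :
    fourierPi (fun x => f (M.mulVec x)) (Mᵀ.mulVec y) = (|M.det|⁻¹ : ℝ) * fourierPi f y := by
  have hmap := Real.map_matrix_volume_pi_eq_smul_volume_pi hM
  set g : (Fin d → ℝ) → ℂ := fun x =>
    Complex.exp (-2 * Real.pi * Complex.I * ((y ⬝ᵥ x : ℝ) : ℂ)) * f x with hg
  have hgc : Continuous g := by
    simp only [hg, dotProduct]
    fun_prop
  have h := integral_map (μ := volume) (φ := Matrix.toLin' M) (f := g)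
    (LinearMap.continuous_of_finiteDimensional _).aemeasurable hgc.aestronglyMeasurable
  rw [hmap, integral_smul_measure, ENNReal.toReal_ofReal (abs_nonneg _), abs_inv] at h
  rw [fourierPi, fourierPi, ← Complex.real_smul]
  refine Eq.trans ?_ h.symm
  simp only [hg, Matrix.toLin'_apply, Matrix.mulVec_transpose, ← Matrix.dotProduct_mulVec]


/-! ### Summation over dyadic blocks -/

/-- A tuple with prescribed sum `n` is determined by all its entries but the first, each at most `n`. -/
lemma card_sum_eq_le {d : ℕ} (hd : 1 ≤ d) (n : ℕ) (S : Finset (Fin d → ℕ))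
    (hS : ∀ s ∈ S, ∑ i, s i = n) : S.card ≤ (n + 1) ^ (d - 1) := by
  obtain ⟨k, rfl⟩ : ∃ k, d = k + 1 := ⟨d - 1, by omega⟩
  have : (Fintype.piFinset fun _ : Fin k => Finset.range (n + 1)).card = (n + 1) ^ k := by simp
  rw [Nat.add_sub_cancel, ← this]
  refine Finset.card_le_card_of_injOn (fun s i => s i.succ) ?_ ?_
  · intro s hs
    simp only [Finset.mem_coe, Fintype.mem_piFinset, Finset.mem_range]
    intro i
    have h1 := Finset.single_le_sum (f := s) (fun _ _ => Nat.zero_le _) (Finset.mem_univ i.succ)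
    have h2 := hS s hs
    omega
  · intro s hs t ht hst
    have h1 := hS s hs
    have h2 := hS t ht
    rw [Fin.sum_univ_succ] at h1 h2
    have h3 : ∑ i : Fin k, s i.succ = ∑ i : Fin k, t i.succ :=
      Finset.sum_congr rfl fun i _ => congrFun hst i
    funext i
    refine Fin.cases ?_ (fun i => congrFun hst i) i
    omega

/-- The tail of `∑ (n + 1)^p 2^{-n}` over `2^n ≥ N` is of the order of its first term. The tail is taken
over arbitrary finite sets of indices, as needed for bounds on partial sums. -/
lemma exists_geom_tail (p : ℕ) : ∃ K : ℝ, 0 < K ∧ ∀ N : ℝ, 1 ≤ N → ∀ F : Finset ℕ,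
    (∀ n ∈ F, N ≤ 2 ^ n) →
    ∑ n ∈ F, ((n : ℝ) + 1) ^ p * (1 / 2) ^ n ≤ K / N * Real.logb 2 (2 * N) ^ p := by
  have hsum : Summable fun k : ℕ => ((k : ℝ) + 1) ^ p * (1 / 2) ^ k := by
    have h := summable_pow_mul_geometric_of_norm_lt_one p (r := (1 / 2 : ℝ)) (by norm_num)
    have h' := ((summable_nat_add_iff 1).2 h).mul_left 2
    refine h'.congr fun k => ?_
    push_cast
    rw [pow_succ]
    ring
  set K₀ : ℝ := ∑' k : ℕ, ((k : ℝ) + 1) ^ p * (1 / 2) ^ k with hK₀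
  have hK₀nn : 0 ≤ K₀ := tsum_nonneg fun k => by positivity
  refine ⟨2 ^ p * (K₀ + 1), by positivity, fun N hN F hF => ?_⟩
  have hNpos : 0 < N := by linarith
  have hex : ∃ n : ℕ, N ≤ 2 ^ n := by
    obtain ⟨n, hn⟩ := pow_unbounded_of_one_lt N (one_lt_two)
    exact ⟨n, hn.le⟩
  classical
  set n₀ := Nat.find hex with hn₀
  have h0 : N ≤ 2 ^ n₀ := Nat.find_spec hex
  have hmin : ∀ n ∈ F, n₀ ≤ n := fun n hn => Nat.find_min' hex (hF n hn)
  have hlog : 0 ≤ Real.logb 2 N := Real.logb_nonneg one_lt_two hN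
  have hlog2 : Real.logb 2 (2 * N) = 1 + Real.logb 2 N := by
    rw [Real.logb_mul two_ne_zero hNpos.ne', Real.logb_self_eq_one one_lt_two]
  have hn₀le : (n₀ : ℝ) ≤ Real.logb 2 N + 1 := by
    rcases Nat.eq_zero_or_pos n₀ with h | h
    · rw [h]; push_cast; linarith
    · have h1 : (2 : ℝ) ^ (n₀ - 1) < N := not_le.1 (Nat.find_min hex (Nat.sub_one_lt_of_lt h))
      have h2 : ((n₀ - 1 : ℕ) : ℝ) ≤ Real.logb 2 N := by
        rw [Real.le_logb_iff_rpow_le one_lt_two hNpos, Real.rpow_natCast]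
        exact h1.le
      rw [Nat.cast_sub h] at h2
      push_cast at h2
      linarith
  have hterm : ∀ n ∈ F, ((n : ℝ) + 1) ^ p * (1 / 2) ^ n ≤
      (((n₀ : ℝ) + 1) ^ p * (1 / 2) ^ n₀) *
        ((((n - n₀ : ℕ) : ℝ) + 1) ^ p * (1 / 2) ^ (n - n₀)) := by
    intro n hn
    obtain ⟨k, rfl⟩ := Nat.exists_eq_add_of_le (hmin n hn)
    rw [Nat.add_sub_cancel_left, pow_add (1 / 2 : ℝ)]
    have : ((n₀ + k : ℕ) : ℝ) + 1 ≤ (n₀ + 1) * (k + 1) := by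
      push_cast
      nlinarith [(by positivity : (0 : ℝ) ≤ n₀ * k)]
    calc _ ≤ (((n₀ : ℝ) + 1) * (k + 1)) ^ p * ((1 / 2) ^ n₀ * (1 / 2) ^ k) := by gcongr
      _ = _ := by rw [mul_pow]; ring
  have hinj : Set.InjOn (fun n => n - n₀) (F : Set ℕ) := by
    intro a ha b hb hab
    have := hmin a ha
    have := hmin b hb
    simp only at hab
    omega
  have htail : ∑ n ∈ F, ((((n - n₀ : ℕ) : ℝ) + 1) ^ p * (1 / 2) ^ (n - n₀)) ≤ K₀ := by
    rw [← Finset.sum_image (g := fun n => n - n₀)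
      (f := fun k : ℕ => ((k : ℝ) + 1) ^ p * (1 / 2) ^ k) hinj]
    exact hsum.sum_le_tsum _ fun k _ => by positivity
  have hhalf : (1 / 2 : ℝ) ^ n₀ ≤ 1 / N := by
    rw [_root_.one_div_pow]
    exact one_div_le_one_div_of_le hNpos h0
  calc _ ≤ ∑ n ∈ F, _ := Finset.sum_le_sum hterm
    _ = (((n₀ : ℝ) + 1) ^ p * (1 / 2) ^ n₀) * _ := (Finset.mul_sum _ _ _).symm
    _ ≤ ((2 * Real.logb 2 (2 * N)) ^ p * (1 / N)) * (K₀ + 1) := by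
        have h1 : (n₀ : ℝ) + 1 ≤ 2 * Real.logb 2 (2 * N) := by linarith
        have h2 : 0 ≤ Real.logb 2 (2 * N) := by linarith
        refine mul_le_mul (by gcongr) (htail.trans (by linarith)) ?_ (by positivity)
        exact Finset.sum_nonneg fun k _ => by positivity
    _ = _ := by rw [mul_pow]; ring

/-- The counting argument behind the error bound: terms `g m` sorted into dyadic blocks `σ m`, of size
at most `P 4^{-|σ m|}`, with at most `Q 2^{|s|} / N` terms in block `s` and no term in the blocks with
`2^{|s|} < N`. -/
lemma exists_dyadic_bound (d : ℕ) (hd : 1 ≤ d) : ∃ K : ℝ, 0 < K ∧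
    ∀ (M : Type) (σ : M → Fin d → ℕ) (g : M → ℝ) (T : Finset M) (N P Q : ℝ),
    1 ≤ N → 0 ≤ P → 0 ≤ Q →
    (∀ m ∈ T, g m ≤ P * (1 / 4) ^ ∑ i, σ m i) →
    (∀ m ∈ T, N ≤ 2 ^ ∑ i, σ m i) →
    (∀ s, ∀ T' ⊆ T, (∀ m ∈ T', σ m = s) → (T'.card : ℝ) ≤ Q * (2 ^ ∑ i, s i) / N) →
    ∑ m ∈ T, g m ≤ P * Q * K / N ^ 2 * Real.logb 2 (2 * N) ^ (d - 1) := by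
  classical
  obtain ⟨K, hK, hKb⟩ := exists_geom_tail (d - 1)
  refine ⟨K, hK, fun M σ g T N P Q hN hP hQ hg hT hcard => ?_⟩
  have hNpos : 0 < N := by linarith
  set S := T.image σ
  have hS : ∀ s ∈ S, N ≤ 2 ^ ∑ i, s i := by
    intro s hs
    obtain ⟨m, hm, rfl⟩ := Finset.mem_image.1 hs
    exact hT m hm
  have hfib : ∀ s ∈ S, ∑ m ∈ T with σ m = s, g m ≤ P * Q / N * (1 / 2) ^ ∑ i, s i := by
    intro s _
    calc ∑ m ∈ T with σ m = s, g m
        ≤ ∑ m ∈ T with σ m = s, P * (1 / 4) ^ ∑ i, s i := by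
          refine Finset.sum_le_sum fun m hm => ?_
          rw [← (Finset.mem_filter.1 hm).2]
          exact hg m (Finset.mem_filter.1 hm).1
      _ = ((T.filter (σ · = s)).card : ℝ) * (P * (1 / 4) ^ ∑ i, s i) := by
          rw [Finset.sum_const, nsmul_eq_mul]
      _ ≤ (Q * (2 ^ ∑ i, s i) / N) * (P * (1 / 4) ^ ∑ i, s i) := by
          gcongr
          exact hcard s _ (Finset.filter_subset _ _) fun m hm => (Finset.mem_filter.1 hm).2
      _ = P * Q / N * (2 ^ (∑ i, s i) * (1 / 4) ^ ∑ i, s i) := by ring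
      _ = _ := by rw [← mul_pow]; norm_num
  have hlev : ∀ n ∈ S.image (fun s => ∑ i, s i),
      ∑ s ∈ S with ∑ i, s i = n, P * Q / N * (1 / 2) ^ ∑ i, s i ≤
        P * Q / N * (((n : ℝ) + 1) ^ (d - 1) * (1 / 2) ^ n) := by
    intro n _
    have h1 : ((S.filter fun s => ∑ i, s i = n).card : ℝ) ≤ ((n : ℝ) + 1) ^ (d - 1) := by
      exact_mod_cast card_sum_eq_le hd n _ fun s hs => (Finset.mem_filter.1 hs).2
    calc _ = ∑ s ∈ S with ∑ i, s i = n, P * Q / N * (1 / 2) ^ n := by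
          refine Finset.sum_congr rfl fun s hs => ?_
          rw [(Finset.mem_filter.1 hs).2]
      _ = ((S.filter fun s => ∑ i, s i = n).card : ℝ) * (P * Q / N * (1 / 2) ^ n) := by
          rw [Finset.sum_const, nsmul_eq_mul]
      _ ≤ ((n : ℝ) + 1) ^ (d - 1) * (P * Q / N * (1 / 2) ^ n) := by gcongr
      _ = _ := by ring
  calc ∑ m ∈ T, g m = ∑ s ∈ S, ∑ m ∈ T with σ m = s, g m :=
        (Finset.sum_fiberwise_of_maps_to (fun m hm => Finset.mem_image_of_mem σ hm) g).symm
    _ ≤ ∑ s ∈ S, P * Q / N * (1 / 2) ^ ∑ i, s i := Finset.sum_le_sum hfib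
    _ = ∑ n ∈ S.image (fun s => ∑ i, s i), ∑ s ∈ S with ∑ i, s i = n,
          P * Q / N * (1 / 2) ^ ∑ i, s i :=
        (Finset.sum_fiberwise_of_maps_to (fun s hs => Finset.mem_image_of_mem _ hs) _).symm
    _ ≤ ∑ n ∈ S.image (fun s : Fin d → ℕ => ∑ i, s i),
          P * Q / N * (((n : ℝ) + 1) ^ (d - 1) * (1 / 2) ^ n) := Finset.sum_le_sum hlev
    _ = P * Q / N * ∑ n ∈ S.image (fun s : Fin d → ℕ => ∑ i, s i),
          (((n : ℝ) + 1) ^ (d - 1) * (1 / 2) ^ n) := (Finset.mul_sum _ _ _).symm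
    _ ≤ P * Q / N * (K / N * Real.logb 2 (2 * N) ^ (d - 1)) := by
        gcongr
        refine hKb N hN _ fun n hn => ?_
        obtain ⟨s, hs, rfl⟩ := Finset.mem_image.1 hn
        exact hS s hs
    _ = _ := by field_simp

/-! ### The Fourier transform of the hat functions -/

lemma hatFn_eq_max {u : ℝ} (hu : 0 < u) (t : ℝ) : hatFn u t = max 0 (1 - |t| / u) := by
  unfold hatFn
  split_ifs with h
  · rw [max_eq_right]
    rw [sub_nonneg]
    exact (div_le_one hu).2 h
  · rw [max_eq_left]
    rw [sub_nonpos]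
    exact (one_le_div hu).2 (not_le.1 h).le

lemma continuous_hatFn {u : ℝ} (hu : 0 < u) : Continuous (hatFn u) := by
  have : hatFn u = fun t => max 0 (1 - |t| / u) := funext (hatFn_eq_max hu)
  rw [this]
  fun_prop

lemma hatFn_eq_zero {u t : ℝ} (h : u < |t|) : hatFn u t = 0 := if_neg (not_le.2 h)

lemma abs_hatFn_le {u : ℝ} (hu : 0 < u) (t : ℝ) : |hatFn u t| ≤ 1 := by
  rw [hatFn_eq_max hu, abs_of_nonneg (le_max_left _ _)]
  refine max_le zero_le_one ?_
  have : 0 ≤ |t| / u := by positivity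
  linarith

lemma continuous_hatBox {d : ℕ} (x0 : Fin d → ℝ) {u : Fin d → ℝ} (hu : ∀ j, 0 < u j) :
    Continuous (hatBox x0 u) := by
  unfold hatBox
  refine continuous_const.mul (continuous_finsetProd _ fun j _ => ?_)
  exact (continuous_hatFn (hu j)).comp ((continuous_apply j).sub continuous_const)

lemma hasCompactSupport_hatBox {d : ℕ} (x0 u : Fin d → ℝ) :
    HasCompactSupport (hatBox x0 u) := by
  refine HasCompactSupport.intro
    (isCompact_univ_pi fun j => isCompact_Icc (a := x0 j - u j) (b := x0 j + u j)) fun x hx => ?_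
  obtain ⟨j, hj⟩ : ∃ j, x j ∉ Set.Icc (x0 j - u j) (x0 j + u j) := by
    simpa only [Set.mem_univ_pi, not_forall] using hx
  have : u j < |x j - x0 j| := by
    by_contra h
    rw [not_lt, abs_le] at h
    exact hj ⟨by linarith [h.1], by linarith [h.2]⟩
  have h0 : ∏ j, hatFn (u j) (x j - x0 j) = 0 :=
    Finset.prod_eq_zero (Finset.mem_univ j) (hatFn_eq_zero this)
  rw [hatBox, h0, mul_zero]

/-- An antiderivative of `(1 + v t) e^{c t}`; within its support the hat function is of
the form `1 + v t` on either side of `0`. -/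
lemma hasDerivAt_affine_exp {c v : ℂ} (hc : c ≠ 0) (t : ℝ) :
    HasDerivAt (fun t : ℝ => (1 + v * t) * Complex.exp (c * t) / c
      - v * Complex.exp (c * t) / c ^ 2) ((1 + v * t) * Complex.exp (c * t)) t := by
  have h1 : HasDerivAt (fun t : ℝ => (t : ℂ)) 1 t := Complex.ofRealCLM.hasDerivAt
  have h2 : HasDerivAt (fun t : ℝ => Complex.exp (c * t)) (Complex.exp (c * t) * (c * 1)) t :=
    (h1.const_mul c).cexp
  have h3 := (((h1.const_mul v).const_add 1).mul h2).div_const c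
  refine (h3.sub ((h2.const_mul v).div_const (c ^ 2))).congr_deriv ?_
  field_simp
  ring

lemma hatFn_fourier_eq_intervalIntegral {u : ℝ} (hu : 0 < u) (c : ℂ) :
    ∫ t : ℝ, Complex.exp (c * t) * (hatFn u t : ℂ) =
      ∫ t in (-u)..u, Complex.exp (c * t) * (hatFn u t : ℂ) := by
  rw [intervalIntegral.integral_of_le (by linarith), ← integral_Icc_eq_integral_Ioc,
    setIntegral_eq_integral_of_forall_compl_eq_zero]
  intro t ht
  rw [hatFn_eq_zero, Complex.ofReal_zero, mul_zero]
  by_contra h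
  rw [not_lt, abs_le] at h
  exact ht h

/-- For `c = -2πiy` the right-hand side is `sin²(πuy) / (π² u y²)`. -/
lemma hatFn_fourier_eq {u : ℝ} (hu : 0 < u) {c : ℂ} (hc : c ≠ 0) :
    ∫ t : ℝ, Complex.exp (c * t) * (hatFn u t : ℂ) =
      (Complex.exp (c * u) + Complex.exp (-(c * u)) - 2) / (u * c ^ 2) := by
  have hu' : (u : ℂ) ≠ 0 := by exact_mod_cast hu.ne'
  have hcont : Continuous fun t : ℝ => Complex.exp (c * t) * (hatFn u t : ℂ) := by
    have := continuous_hatFn hu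
    fun_prop
  have hpiece : ∀ (v : ℂ) (a b : ℝ), (∫ t in a..b, (1 + v * t) * Complex.exp (c * t)) =
      ((1 + v * b) * Complex.exp (c * b) / c - v * Complex.exp (c * b) / c ^ 2) -
      ((1 + v * a) * Complex.exp (c * a) / c - v * Complex.exp (c * a) / c ^ 2) := by
    intro v a b
    refine intervalIntegral.integral_eq_sub_of_hasDerivAt
      (fun t _ => hasDerivAt_affine_exp hc t) (Continuous.intervalIntegrable ?_ _ _)
    fun_prop
  have hneg : (∫ t in (-u)..0, Complex.exp (c * t) * (hatFn u t : ℂ)) =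
      ∫ t in (-u)..0, (1 + (1 / u : ℂ) * t) * Complex.exp (c * t) := by
    refine intervalIntegral.integral_congr fun t ht => ?_
    rw [Set.uIcc_of_le (by linarith)] at ht
    have : |t| = -t := abs_of_nonpos ht.2
    simp only [hatFn]
    rw [if_pos (by rw [this]; linarith [ht.1]), this]
    push_cast
    ring
  have hpos : (∫ t in (0)..u, Complex.exp (c * t) * (hatFn u t : ℂ)) =
      ∫ t in (0)..u, (1 + (-1 / u : ℂ) * t) * Complex.exp (c * t) := by
    refine intervalIntegral.integral_congr fun t ht => ?_
    rw [Set.uIcc_of_le hu.le] at ht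
    have : |t| = t := abs_of_nonneg ht.1
    simp only [hatFn]
    rw [if_pos (by rw [this]; exact ht.2), this]
    push_cast
    ring
  rw [hatFn_fourier_eq_intervalIntegral hu, ← intervalIntegral.integral_add_adjacent_intervals
    (hcont.intervalIntegrable (-u) 0) (hcont.intervalIntegrable 0 u), hneg, hpos, hpiece, hpiece]
  simp only [Complex.ofReal_neg, Complex.ofReal_zero, mul_zero, Complex.exp_zero, mul_neg]
  field_simp
  ring

lemma norm_hatFn_fourier_le {u : ℝ} (hu : 0 < u) (y : ℝ) :
    ‖∫ t : ℝ, Complex.exp (-2 * Real.pi * Complex.I * y * t) * (hatFn u t : ℂ)‖ ≤ 2 * u := by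
  rw [hatFn_fourier_eq_intervalIntegral hu]
  refine (intervalIntegral.norm_integral_le_of_norm_le_const (C := 1) fun t _ => ?_).trans ?_
  · rw [norm_mul, Complex.norm_real, Real.norm_eq_abs]
    have : ‖Complex.exp (-2 * Real.pi * Complex.I * y * t)‖ = 1 := by
      rw [Complex.norm_exp]; simp
    rw [this, one_mul]
    exact abs_hatFn_le hu t
  · rw [abs_of_pos (by linarith)]
    linarith

/-- The bound `1 / (u y²)` for the transform, multiplied out so that it also makes sense at `y = 0`. -/
lemma norm_hatFn_fourier_mul_le {u : ℝ} (hu : 0 < u) (y : ℝ) :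
    u * ‖∫ t : ℝ, Complex.exp (-2 * Real.pi * Complex.I * y * t) * (hatFn u t : ℂ)‖ * y ^ 2
      ≤ 1 := by
  rcases eq_or_ne y 0 with rfl | hy
  · simp
  have hc : (-2 * Real.pi * Complex.I * y : ℂ) ≠ 0 := by
    simp [Real.pi_ne_zero, hy]
  rw [hatFn_fourier_eq hu hc, norm_div, norm_mul, norm_pow]
  have h1 : ‖(-2 * Real.pi * Complex.I * y : ℂ)‖ = 2 * Real.pi * |y| := by
    simp [abs_of_pos Real.pi_pos]
  have h2 : ‖Complex.exp (-2 * Real.pi * Complex.I * y * u) +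
      Complex.exp (-(-2 * Real.pi * Complex.I * y * u)) - 2‖ ≤ 4 := by
    refine (norm_sub_le _ _).trans ?_
    have := norm_add_le (Complex.exp (-2 * Real.pi * Complex.I * y * u))
      (Complex.exp (-(-2 * Real.pi * Complex.I * y * u)))
    have e1 : ‖Complex.exp (-2 * Real.pi * Complex.I * y * u)‖ = 1 := by
      rw [Complex.norm_exp]; simp
    have e2 : ‖Complex.exp (-(-2 * Real.pi * Complex.I * y * u))‖ = 1 := by
      rw [Complex.norm_exp]; simp
    have e3 : ‖(2 : ℂ)‖ = 2 := by simp
    linarith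
  rw [h1, Complex.norm_real, Real.norm_eq_abs, abs_of_pos hu, mul_pow, sq_abs]
  have hy2 : 0 < y ^ 2 := by positivity
  have hpi := Real.pi_gt_three
  calc _ ≤ u * (4 / (u * ((2 * Real.pi) ^ 2 * y ^ 2))) * y ^ 2 := by gcongr
    _ = 1 / Real.pi ^ 2 := by field_simp; norm_num
    _ ≤ 1 := by
        rw [div_le_one (by positivity)]
        nlinarith

lemma norm_hatFn_fourier_shift (u x y : ℝ) :
    ‖∫ t : ℝ, Complex.exp (-2 * Real.pi * Complex.I * y * t) * (hatFn u (t - x) : ℂ)‖ =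
      ‖∫ t : ℝ, Complex.exp (-2 * Real.pi * Complex.I * y * t) * (hatFn u t : ℂ)‖ := by
  have h := integral_sub_right_eq_self (μ := volume) (fun t : ℝ =>
    Complex.exp (-2 * Real.pi * Complex.I * y * (t + x : ℝ)) * (hatFn u t : ℂ)) x
  simp only [sub_add_cancel] at h
  rw [h]
  have : ∀ t : ℝ, Complex.exp (-2 * Real.pi * Complex.I * y * (t + x : ℝ)) * (hatFn u t : ℂ) =
      Complex.exp (-2 * Real.pi * Complex.I * y * x) *
        (Complex.exp (-2 * Real.pi * Complex.I * y * t) * (hatFn u t : ℂ)) := by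
    intro t
    rw [← mul_assoc, ← Complex.exp_add]
    push_cast
    ring_nf
  simp only [this]
  rw [integral_const_mul, norm_mul]
  have e1 : ‖Complex.exp (-2 * Real.pi * Complex.I * y * x)‖ = 1 := by
    rw [Complex.norm_exp]; simp
  rw [e1, one_mul]

lemma hatBox_fourier_eq_prod {d : ℕ} (x0 u y : Fin d → ℝ) :
    fourierPi (fun x => (hatBox x0 u x : ℂ)) y =
      ∏ j, ((u j : ℂ) * ∫ t : ℝ, Complex.exp (-2 * Real.pi * Complex.I * y j * t) *
        (hatFn (u j) (t - x0 j) : ℂ)) := by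
  rw [fourierPi, Finset.prod_mul_distrib, ← integral_fintype_prod_volume_eq_prod, ← integral_const_mul]
  congr 1
  funext x
  rw [Finset.prod_mul_distrib, ← Complex.exp_sum, hatBox]
  have : (-2 * Real.pi * Complex.I * ((y ⬝ᵥ x : ℝ) : ℂ)) =
      ∑ j, -2 * Real.pi * Complex.I * y j * x j := by
    simp only [dotProduct]
    push_cast
    rw [Finset.mul_sum]
    exact Finset.sum_congr rfl fun _ _ => by ring
  rw [this]
  push_cast
  ring

/-- Take the least `s` with `t ≤ 2^s`. If `s = 0` the first alternative holds, and otherwise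
`2^{s-1} < t` gives the second. -/
lemma exists_dyadic (t : ℝ) : ∃ s : ℕ, t ≤ 2 ^ s ∧ ((4 : ℝ) ^ s ≤ 4 ∨ (4 : ℝ) ^ s ≤ 4 * t ^ 2) := by
  have hex : ∃ s : ℕ, t ≤ 2 ^ s := by
    obtain ⟨n, hn⟩ := pow_unbounded_of_one_lt t (one_lt_two)
    exact ⟨n, hn.le⟩
  classical
  refine ⟨Nat.find hex, Nat.find_spec hex, ?_⟩
  rcases h : Nat.find hex with _ | k
  · left; norm_num
  · right
    have h1 : (2 : ℝ) ^ k < t := not_le.1 (Nat.find_min hex (by omega))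
    have h2 : (4 : ℝ) ^ k = (2 ^ k) ^ 2 := by rw [← pow_mul, mul_comm, pow_mul]; norm_num
    have h3 : (0 : ℝ) < 2 ^ k := by positivity
    rw [pow_succ, h2]
    nlinarith

/-- Decay of the transform of `h_B` in terms of dyadic blocks: with `s_j` the dyadic
block of `u_j |y_j|`, both bounds on the univariate transform combine to `8 u_j² 4^{-s_j}` in each
coordinate. -/
lemma exists_dyadic_norm_fourier_le {d : ℕ} (x0 : Fin d → ℝ) {u : Fin d → ℝ} (hu : ∀ j, 0 < u j)
    (y : Fin d → ℝ) : ∃ s : Fin d → ℕ, (∀ j, u j * |y j| ≤ 2 ^ s j) ∧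
      ‖fourierPi (fun x => (hatBox x0 u x : ℂ)) y‖ ≤ 8 ^ d * (∏ j, u j) ^ 2 * (1 / 4) ^ ∑ j, s j := by
  choose s hs hs' using fun j => exists_dyadic (u j * |y j|)
  refine ⟨s, hs, ?_⟩
  rw [hatBox_fourier_eq_prod, norm_prod]
  have hterm : ∀ j, ‖(u j : ℂ) * ∫ t : ℝ, Complex.exp (-2 * Real.pi * Complex.I * y j * t) *
        (hatFn (u j) (t - x0 j) : ℂ)‖ ≤ 8 * u j ^ 2 * (1 / 4) ^ s j := by
    intro j
    rw [norm_mul, norm_hatFn_fourier_shift, Complex.norm_real, Real.norm_eq_abs,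
      abs_of_pos (hu j)]
    have h1 := norm_hatFn_fourier_le (hu j) (y j)
    have h2 := norm_hatFn_fourier_mul_le (hu j) (y j)
    set J := ‖∫ t : ℝ, Complex.exp (-2 * Real.pi * Complex.I * y j * t) * (hatFn (u j) t : ℂ)‖
    have hJ : 0 ≤ J := norm_nonneg _
    have huj := hu j
    rw [_root_.one_div_pow, mul_one_div, le_div_iff₀ (by positivity)]
    -- With `J` the univariate transform, `J ≤ 2u` settles small frequencies and `u J y² ≤ 1` the
    -- others.
    rcases hs' j with h | h
    · calc u j * J * 4 ^ s j ≤ u j * (2 * u j) * 4 := by gcongr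
        _ = _ := by ring
    · calc u j * J * 4 ^ s j ≤ u j * J * (4 * (u j * |y j|) ^ 2) := by gcongr
        _ = 4 * u j ^ 2 * (u j * J * y j ^ 2) := by rw [mul_pow, sq_abs]; ring
        _ ≤ 4 * u j ^ 2 * 1 := by gcongr
        _ ≤ _ := by nlinarith [sq_nonneg (u j)]
  refine (Finset.prod_le_prod (fun _ _ => norm_nonneg _) fun j _ => hterm j).trans (le_of_eq ?_)
  rw [Finset.prod_mul_distrib, Finset.prod_mul_distrib, Finset.prod_pow, Finset.prod_pow_eq_pow_sum]
  simp

/-! ### The error bound -/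

/-- Frolov lattice properties (1°) and (2°), plus the invertibility of the cubature error
estimate: there exist `c(d,A) > 0` and `C(d,A) > 0` such that for all `a > 1` and all
`V ≥ V₀ := c(d,A) a^{-d}`, for every axis-parallel box
`B = ∏_j [x⁰_j - u_j, x⁰_j + u_j) ⊆ [0,1)^d` of volume `V`, the error of the Frolov cubature
formula `Φ(a,A)` on the smooth hat function `h_B` satisfies
`|Φ(a,A)(h_B) - ∫_{ℝ^d} h_B| ≤ C(d,A) a^{-2d} (log₂(2V/V₀))^{d-1}`. -/
theorem frolov_smooth_fixed_volume_discrepancy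
    (d : ℕ) (hd : 2 ≤ d) (A : Matrix (Fin d) (Fin d) ℝ)
    (hA : IsUnit A.det)
    (h1 : ∀ m : Fin d → ℤ, m ≠ 0 → 1 ≤ |∏ j, A.mulVec (fun i => (m i : ℝ)) j|)
    (h2 : ∀ x y : Fin d → ℝ, (∀ j, x j ≤ y j) →
      {m : Fin d → ℤ | ∀ j, A.mulVec (fun i => (m i : ℝ)) j ∈ Set.Icc (x j) (y j)}.Finite ∧
      ({m : Fin d → ℤ | ∀ j, A.mulVec (fun i => (m i : ℝ)) j ∈ Set.Icc (x j) (y j)}.ncard : ℝ)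
        ≤ ∏ j, (y j - x j) + 1) :
    ∃ c C : ℝ, 0 < c ∧ 0 < C ∧ ∀ a : ℝ, 1 < a → ∀ V : ℝ, c / a ^ d ≤ V →
      ∀ x0 u : Fin d → ℝ, (∀ j, 0 < u j) →
      (∀ j, 0 ≤ x0 j - u j) → (∀ j, x0 j + u j ≤ 1) →
      (∏ j, (2 * u j)) = V →
      |(a ^ d * |A.det|)⁻¹ *
          (∑' m : Fin d → ℤ,
            hatBox x0 u (fun j => a⁻¹ * (A⁻¹)ᵀ.mulVec (fun i => (m i : ℝ)) j)) -
          ∫ x : Fin d → ℝ, hatBox x0 u x| ≤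
        C * (a ^ (2 * d))⁻¹ * Real.logb 2 (2 * V / (c / a ^ d)) ^ (d - 1) := by
  classical
  have hdet : A.det ≠ 0 := hA.ne_zero
  obtain ⟨K, hK, hKb⟩ := exists_dyadic_bound d (by omega)
  refine ⟨2 ^ d, 8 ^ d * (2 ^ d + 1) * K, by positivity, by positivity, ?_⟩
  intro a ha V hV x0 u hu _ _ hvol
  have ha0 : 0 < a := by linarith
  set U : ℝ := ∏ j, u j with hU
  have hUpos : 0 < U := Finset.prod_pos fun j _ => hu j
  set N : ℝ := a ^ d * U with hN
  have hNpos : 0 < N := by positivity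
  have hVN : V = 2 ^ d * U := by
    rw [← hvol, Finset.prod_mul_distrib]
    simp [hU]
  have hN1 : 1 ≤ N := by
    rw [hVN, div_le_iff₀ (by positivity)] at hV
    have h2d : (0 : ℝ) < 2 ^ d := by positivity
    nlinarith
  have hlogarg : 2 * V / (2 ^ d / a ^ d) = 2 * N := by
    rw [hVN, hN]
    field_simp
  set h : (Fin d → ℝ) → ℂ := fun x => (hatBox x0 u x : ℂ) with hh
  have hcont : Continuous h := Complex.continuous_ofReal.comp (continuous_hatBox x0 hu)
  set z : (Fin d → ℤ) → Fin d → ℝ := fun m => A.mulVec fun i => (m i : ℝ) with hz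
  set F : (Fin d → ℤ) → ℂ := fun m => fourierPi h (a • z m) with hF
  choose σ hσ hσF using fun m => exists_dyadic_norm_fourier_le x0 hu (a • z m)
  have hσ' : ∀ m j, |z m j| ≤ 2 ^ σ m j / (a * u j) := by
    intro m j
    have huj := hu j
    have h := hσ m j
    rw [Pi.smul_apply, smul_eq_mul, abs_mul, abs_of_pos ha0] at h
    rw [le_div_iff₀ (by positivity)]
    linarith
  have hprod : ∀ s : Fin d → ℕ, ∏ j, (2 : ℝ) ^ s j / (a * u j) = 2 ^ (∑ j, s j) / N := by
    intro s
    rw [Finset.prod_div_distrib, Finset.prod_pow_eq_pow_sum, Finset.prod_mul_distrib]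
    simp [hN, hU]
  -- Property (1°): the hyperbolic cross `∏ |(Am)_j| < 1` contains no nonzero lattice point.
  have hlevel : ∀ m, m ≠ 0 → N ≤ 2 ^ ∑ j, σ m j := by
    intro m hm
    have h := h1 m hm
    rw [Finset.abs_prod] at h
    have h' := h.trans (Finset.prod_le_prod (fun j _ => abs_nonneg _) fun j _ => hσ' m j)
    rw [hprod, one_le_div hNpos] at h'
    exact h'
  have hbound : ∀ T : Finset (Fin d → ℤ), (∀ m ∈ T, m ≠ 0) →
      ∑ m ∈ T, ‖F m‖ ≤ 8 ^ d * (2 ^ d + 1) * K * (a ^ (2 * d))⁻¹ *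
        Real.logb 2 (2 * N) ^ (d - 1) := by
    intro T hT
    have hb := hKb (Fin d → ℤ) σ (fun m => ‖F m‖) T N (8 ^ d * U ^ 2) (2 ^ d + 1) hN1
      (by positivity) (by positivity) (fun m _ => hσF m) (fun m hm => hlevel m (hT m hm)) ?_
    · refine hb.trans (le_of_eq ?_)
      rw [hN, pow_mul']
      field_simp
    · intro s T' hT' hs
      rcases T'.eq_empty_or_nonempty with rfl | ⟨m₀, hm₀⟩
      · simp only [Finset.card_empty, Nat.cast_zero]
        positivity
      have hone : 1 ≤ 2 ^ (∑ j, s j) / N := by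
        rw [one_le_div hNpos, ← hs m₀ hm₀]
        exact hlevel m₀ (hT m₀ (hT' hm₀))
      have hpos : ∀ j, 0 ≤ (2 : ℝ) ^ s j / (a * u j) := fun j => by
        have := hu j
        positivity
      -- Property (2°) for the box of half-widths `2^{s_j} / (a u_j)`, of volume `2^d 2^{|s|} / N`; the
      -- additional `1` is absorbed because the block is nonempty.
      obtain ⟨hfin, hcard⟩ := h2 (fun j => -(2 ^ s j / (a * u j))) (fun j => 2 ^ s j / (a * u j))
        fun j => by linarith [hpos j]
      have hsub : (T'.card : ℝ) ≤
          ∏ j, ((2 : ℝ) ^ s j / (a * u j) - -(2 ^ s j / (a * u j))) + 1 := by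
        refine le_trans ?_ hcard
        rw [← Set.ncard_coe_finset]
        refine Nat.cast_le.2 (Set.ncard_le_ncard (fun m hm j => ?_) hfin)
        have h := hσ' m j
        rw [hs m hm] at h
        exact abs_le.1 h
      refine hsub.trans ?_
      have hside : ∀ j, (2 : ℝ) ^ s j / (a * u j) - -(2 ^ s j / (a * u j)) =
          2 * (2 ^ s j / (a * u j)) := fun j => by ring
      simp only [hside]
      rw [Finset.prod_mul_distrib, hprod, Finset.prod_const, Finset.card_univ, Fintype.card_fin,
        mul_div_assoc]
      linarith
  have hboundErase : ∀ T : Finset (Fin d → ℤ), ∑ m ∈ T, ‖if m = 0 then 0 else F m‖ ≤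
      8 ^ d * (2 ^ d + 1) * K * (a ^ (2 * d))⁻¹ * Real.logb 2 (2 * N) ^ (d - 1) := by
    intro T
    refine le_trans (le_of_eq ?_) (hbound (T.filter (· ≠ 0)) fun m hm => (Finset.mem_filter.1 hm).2)
    rw [Finset.sum_filter]
    refine Finset.sum_congr rfl fun m _ => ?_
    by_cases hm : m = 0 <;> simp [hm]
  have hsumNorm : Summable fun m => ‖if m = 0 then 0 else F m‖ :=
    summable_of_sum_le (fun _ => norm_nonneg _) hboundErase
  have hsumF : Summable F := by
    refine (hsumNorm.of_norm.add (hasSum_ite_eq (0 : Fin d → ℤ) (F 0)).summable).congr fun m => ?_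
    by_cases hm : m = 0 <;> simp [hm]
  -- The matrix of the cubature nodes; `Mᵀ` maps the frequency `a A m` to the integer vector `m`.
  set M : Matrix (Fin d) (Fin d) ℝ := a⁻¹ • (A⁻¹)ᵀ with hM
  have hMdet : M.det = (a ^ d * A.det)⁻¹ := by
    rw [hM, Matrix.det_smul, Matrix.det_transpose, Matrix.det_nonsing_inv, Fintype.card_fin,
      Ring.inverse_eq_inv', mul_inv, inv_pow]
  have hMdet0 : M.det ≠ 0 := by
    rw [hMdet]
    positivity
  have hMabs : |M.det|⁻¹ = a ^ d * |A.det| := by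
    rw [hMdet, abs_inv, inv_inv, abs_mul, abs_of_pos (by positivity)]
  set D : ℝ := a ^ d * |A.det| with hD
  have hDpos : 0 < D := by positivity
  have hMz : ∀ m : Fin d → ℤ, Mᵀ.mulVec (a • z m) = fun i => (m i : ℝ) := by
    intro m
    rw [hM, Matrix.transpose_smul, Matrix.transpose_transpose, Matrix.smul_mulVec,
      Matrix.mulVec_smul, smul_smul, inv_mul_cancel₀ ha0.ne', one_smul, hz, Matrix.mulVec_mulVec,
      Matrix.nonsing_inv_mul _ hA, Matrix.one_mulVec]
  have hcoef : ∀ m : Fin d → ℤ,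
      fourierPi (fun x => h (M.mulVec x)) (fun i => (m i : ℝ)) = D * F m := by
    intro m
    rw [← hMz m, fourierPi_comp_mulVec hcont hMdet0, hMabs]
  have hMcont : Continuous fun x : Fin d → ℝ => M.mulVec x :=
    (Matrix.toLin' M).continuous_of_finiteDimensional
  have hMunit : IsUnit M.det := hMdet0.isUnit
  have hsupp : HasCompactSupport fun x => h (M.mulVec x) := by
    have hs : HasCompactSupport h := (hasCompactSupport_hatBox x0 u).comp_left Complex.ofReal_zero
    have hcl : Topology.IsClosedEmbedding fun x : Fin d → ℝ => M.mulVec x :=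
      (Matrix.toLin' M).isClosedEmbedding_of_injective
        (LinearMap.ker_eq_bot.2 (Matrix.mulVec_injective_of_isUnit
          ((Matrix.isUnit_iff_isUnit_det M).2 hMunit)))
    exact hs.comp_isClosedEmbedding hcl
  have hpoisson := hasSum_poisson (hcont.comp hMcont) hsupp
    (by simpa only [Function.comp_def, hcoef] using hsumF.mul_left (D : ℂ))
  simp only [Function.comp_def, hcoef] at hpoisson
  have hD0 : (D : ℂ) ≠ 0 := by exact_mod_cast hDpos.ne'
  have hFsum := hpoisson.mul_left (D : ℂ)⁻¹
  simp only [inv_mul_cancel_left₀ hD0] at hFsum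
  have hF0 : F 0 = ((∫ x, hatBox x0 u x : ℝ) : ℂ) := by
    have hz0 : z 0 = 0 := by
      simp only [hz, Pi.zero_apply, Int.cast_zero]
      exact Matrix.mulVec_zero A
    simp only [hF, hz0, fourierPi, smul_zero, zero_dotProduct, Complex.ofReal_zero, mul_zero,
      Complex.exp_zero, one_mul, hh]
    exact integral_ofReal
  -- Removing the zero frequency from the series leaves exactly the cubature error.
  have herr := hasSum_ite_sub_hasSum hFsum 0
  have hle : ‖(D : ℂ)⁻¹ * (∑' m : Fin d → ℤ, h (M.mulVec fun i => (m i : ℝ))) - F 0‖ ≤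
      8 ^ d * (2 ^ d + 1) * K * (a ^ (2 * d))⁻¹ * Real.logb 2 (2 * N) ^ (d - 1) := by
    rw [← herr.tsum_eq]
    exact (norm_tsum_le_tsum_norm hsumNorm).trans (hsumNorm.tsum_le_of_sum_le hboundErase)
  rw [hlogarg]
  refine le_trans (le_of_eq ?_) hle
  rw [hF0, ← Real.norm_eq_abs, ← Complex.norm_real]
  congr 1
  simp only [hh, hM, Matrix.smul_mulVec]
  push_cast
  rfl
end

section
/- There exist absolute constants c > 0 and C > 0 such that for every n and every V ≥ V_0 := c/b_n the following holds: for every axis-parallel box B = ∏_{j=1}^2 [x_j^0 - u_j, x_j^0 + u_j) ⊆ [0,1)^2 with vol(B) = V, the error of the Fibonacci cubature formula on the periodic smooth hat function h_B satisfies |b_n^{-1} Σ_{μ=1}^{b_n} h_B(μ/b_n, {μ b_{n-1}/b_n}) - ∫_{[0,1]^2} h_B(x) dx| ≤ C log(2V/V_0) / b_n^2, where log denotes the logarithm to base 2. -/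
/-!
The proof is by Fourier analysis on the dual lattice. Up to a constant factor and
an additive constant, `u • hatPer u` is a second difference of the periodic Bernoulli function
`B₂({t})`, so it has an absolutely convergent Fourier series (`hasSum_hat`) with coefficients
`hatCoef u k`, where `0 ≤ hatCoef u k ≤ u ^ 2`, and `hatCoef u k ≤ 1 / k ^ 2` if `k ≠ 0`.
Multiplying two such series and averaging over the Fibonacci nodes keeps only the frequencies
`(k, l)` with `b_n ∣ k + l b_{n-1}`; the frequency `0` gives the integral. Hence the
error is at most the sum of the products of coefficients over the nonzero points of this dual
lattice (`error_le`).

The dual lattice has a hyperbolic gap: a nonzero point with `|k| ≤ A`, `|l| ≤ B` and `A, B ≥ 1`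
forces `b_n ≤ 6AB` (`lattice_gap`). If `k + l b_{n-1} = m b_n`, Cassini's identity expresses
`b_n² (m² + ml - l²)` through `k² + kl(2b_{n-1} + b_n) ± l²`, and the norm form `m² + ml - l²` is a
nonzero integer. Repeated halving of boxes then bounds the number of nonzero lattice points in a
dyadic box `|k| ≤ 2^s`, `|l| ≤ 2^t` by a multiple of `2^(s+t) / b_n` (`exists_cover`).

Writing `u_j ≈ 2^(-a_j)`, the coefficients are dominated by dyadic layers `4^(-s)` on `|k| ≤ 2^s`,
`s ≥ a_j`. With `a = a_1 + a_2`, the error is at most a constant times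
`b_n⁻¹ ∑_{i, j ≥ 0, i + j ≥ D} 2^(-(a + i + j))`, where `D` is the least number with
`b_n ≤ 6 · 2^(a + D)`. The double sum is `(4 + 2D) 2^(-(a + D))` (`tsum_tail_two`, `dual_sum_le`);
here `2^(-(a + D)) ≤ 6 / b_n`, and `D` is at most `log₂ (2 V b_n)` because `2^(-a) ≤ u₁ u₂ = V / 4`.
-/

open MeasureTheory

/-- Fibonacci numbers with `b₀ = b₁ = 1`. -/
def fibb : ℕ → ℕ
  | 0 => 1
  | 1 => 1
  | n + 2 => fibb (n + 1) + fibb n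

/-- The `1`-periodic even hat function (for `0 < u ≤ 1/2`):
`h_u(t) = 1 - |t|/u` for `|t| ≤ u` and `h_u(t) = 0` for `u ≤ |t| ≤ 1/2`,
extended `1`-periodically (here via the distance `|t - round t|` to the nearest integer). -/
noncomputable def hatPer (u t : ℝ) : ℝ :=
  if |t - round t| ≤ u then 1 - |t - round t| / u else 0

/-- The periodic smooth hat function of the box `B = ∏_{j=1}^2 [x⁰_j - u_j, x⁰_j + u_j)`:
`h_B(x) = u₁u₂ · h_{u₁}(x₁ - x⁰₁) h_{u₂}(x₂ - x⁰₂)`. -/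
noncomputable def hatBoxPer (x01 x02 u1 u2 x1 x2 : ℝ) : ℝ :=
  u1 * u2 * hatPer u1 (x1 - x01) * hatPer u2 (x2 - x02)

/-! ### The Fibonacci lattice -/

/-- Cassini's identity, including the truncated case `n = 0`, where `n - 1 = 0`. -/
lemma fibb_cassini (n : ℕ) :
    (fibb (n - 1) : ℤ) ^ 2 + fibb (n - 1) * fibb n - (fibb n : ℤ) ^ 2 = 1 ∨
    (fibb (n - 1) : ℤ) ^ 2 + fibb (n - 1) * fibb n - (fibb n : ℤ) ^ 2 = -1 := by
  rcases n with _ | n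
  · left; simp [fibb]
  · induction n with
    | zero => left; simp [fibb]
    | succ n ih =>
      simp only [Nat.add_sub_cancel] at ih ⊢
      have h : (fibb (n + 1 + 1) : ℤ) = fibb (n + 1) + fibb n := by
        rw [fibb]; push_cast; ring
      rw [h]
      rcases ih with ih | ih
      · right; linear_combination -ih
      · left; linear_combination -ih

lemma fibb_pos (n : ℕ) : 0 < fibb n := by
  induction n using Nat.strong_induction_on with
  | _ n ih =>
    match n with
    | 0 => simp [fibb]
    | 1 => simp [fibb]
    | n + 2 => rw [fibb]; have := ih n (by omega); omega

lemma fibb_pred_le (n : ℕ) : fibb (n - 1) ≤ fibb n := by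
  match n with
  | 0 => simp
  | 1 => simp [fibb]
  | n + 2 => simp [fibb]

/-- The norm form of `ℚ(√5)` is anisotropic. -/
lemma golden_form_eq_zero {m l : ℤ} (h : m ^ 2 + m * l - l ^ 2 = 0) : m = 0 ∧ l = 0 := by
  have h5 : Irrational (Real.sqrt 5) := by
    simpa using Nat.Prime.irrational_sqrt (p := 5) (by norm_num)
  have hl : l = 0 := by
    by_contra hl
    apply h5
    have hlR : (l : ℝ) ≠ 0 := by exact_mod_cast hl
    have e : ((2 * m + l : ℝ)) ^ 2 = 5 * (l : ℝ) ^ 2 := by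
      have : ((2 * m + l : ℤ)) ^ 2 = 5 * l ^ 2 := by linear_combination 4 * h
      exact_mod_cast this
    refine ⟨|((2 * m + l : ℤ) : ℚ) / l|, ?_⟩
    push_cast
    rw [eq_comm, Real.sqrt_eq_iff_mul_self_eq (by norm_num) (abs_nonneg _), abs_mul_abs_self]
    field_simp
    linear_combination -e
  subst hl
  simpa using h

/-- The dual Fibonacci lattice `{(k, l) : b_n ∣ k + l b_{n-1}}` has no nonzero point in a centred
box `[-A, A] × [-B, B]` with `A, B ≥ 1` and `6AB < b_n`. -/
lemma lattice_gap (n : ℕ) {k l A B : ℤ} (hA : 1 ≤ A) (hB : 1 ≤ B) (hk : |k| ≤ A) (hl : |l| ≤ B)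
    (hd : (fibb n : ℤ) ∣ k + l * fibb (n - 1)) (h0 : ¬(k = 0 ∧ l = 0)) :
    (fibb n : ℤ) ≤ 6 * (A * B) := by
  by_contra! hlt
  obtain ⟨m, hm⟩ := hd
  have hb : (0 : ℤ) < fibb n := by exact_mod_cast fibb_pos n
  have hab : (fibb (n - 1) : ℤ) ≤ fibb n := by exact_mod_cast fibb_pred_le n
  have ha : (0 : ℤ) < fibb (n - 1) := by exact_mod_cast fibb_pos _
  have hc := fibb_cassini n
  generalize (fibb n : ℤ) = b at *
  generalize (fibb (n - 1) : ℤ) = a at *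
  have hq : m ^ 2 + m * l - l ^ 2 ≠ 0 := by
    intro hq
    obtain ⟨rfl, rfl⟩ := golden_form_eq_zero hq
    exact h0 ⟨by simpa using hm, rfl⟩
  have hAb : 6 * A < b := by nlinarith
  have hBb : 6 * B < b := by nlinarith
  have hkl : |k * l| ≤ A * B := by
    rw [abs_mul]; exact mul_le_mul hk hl (abs_nonneg _) (by omega)
  have hk2 : k ^ 2 ≤ A ^ 2 := by rw [← sq_abs]; gcongr
  have hl2 : l ^ 2 ≤ B ^ 2 := by rw [← sq_abs]; gcongr
  -- `b² N(m, l) = k² + kl(2a + b) ± l²`, by Cassini's identity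
  have key : b ^ 2 * (m ^ 2 + m * l - l ^ 2)
      = k ^ 2 + k * l * (2 * a + b) + l ^ 2 * (a ^ 2 + a * b - b ^ 2) := by
    have : m * b = k + l * a := by rw [hm]; ring
    linear_combination (m * b + k + l * a + l * b) * this
  have hq1 : 1 ≤ |m ^ 2 + m * l - l ^ 2| := Int.one_le_abs hq
  have h1 : b ^ 2 ≤ |b ^ 2 * (m ^ 2 + m * l - l ^ 2)| := by
    rw [abs_mul, abs_of_nonneg (sq_nonneg b)]; nlinarith [sq_nonneg b]
  have h2 : |k * l * (2 * a + b)| ≤ A * B * (3 * b) := by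
    rw [abs_mul, abs_of_pos (by linarith : 0 < 2 * a + b)]
    exact mul_le_mul hkl (by linarith) (by linarith) (by positivity)
  have h3 : |l ^ 2 * (a ^ 2 + a * b - b ^ 2)| ≤ B ^ 2 := by
    rcases hc with hc | hc <;> rw [hc] <;> simpa using hl2
  have h4 : b ^ 2 ≤ A ^ 2 + A * B * (3 * b) + B ^ 2 := by
    rw [key] at h1
    calc b ^ 2 ≤ _ := h1
      _ ≤ |k ^ 2| + |k * l * (2 * a + b)| + |l ^ 2 * (a ^ 2 + a * b - b ^ 2)| := abs_add_three _ _ _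
      _ ≤ _ := by
        rw [abs_of_nonneg (sq_nonneg k)]; linarith
  nlinarith

/-- The points of the dual Fibonacci lattice in `[X, X + 2^s) × [Y, Y + 2^t)`. -/
noncomputable def latBox (n : ℕ) (X Y : ℤ) (s t : ℕ) : Finset (ℤ × ℤ) :=
  (Finset.Ico X (X + 2 ^ s) ×ˢ Finset.Ico Y (Y + 2 ^ t)).filter
    (fun p => (fibb n : ℤ) ∣ p.1 + p.2 * fibb (n - 1))

lemma latBox_card_le_one (n : ℕ) (X Y : ℤ) (s t : ℕ)
    (h : 6 * 2 ^ (s + t) < fibb n ∨ (s = 0 ∧ t = 0)) : (latBox n X Y s t).card ≤ 1 := by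
  rw [Finset.card_le_one]
  rintro ⟨k, l⟩ hp ⟨k', l'⟩ hp'
  simp only [latBox, Finset.mem_filter, Finset.mem_product, Finset.mem_Ico] at hp hp'
  obtain ⟨⟨⟨h1, h2⟩, h3, h4⟩, h5⟩ := hp
  obtain ⟨⟨⟨h1', h2'⟩, h3', h4'⟩, h5'⟩ := hp'
  rcases h with h | ⟨rfl, rfl⟩
  · by_contra hne
    have := lattice_gap n (k := k - k') (l := l - l') (A := 2 ^ s) (B := 2 ^ t)
      (one_le_pow₀ (by norm_num)) (one_le_pow₀ (by norm_num))
      (by rw [abs_le]; constructor <;> linarith) (by rw [abs_le]; constructor <;> linarith)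
      (by have := dvd_sub h5 h5'; ring_nf at this ⊢; exact this)
      (by
        rintro ⟨e1, e2⟩
        apply hne
        rw [sub_eq_zero.mp e1, sub_eq_zero.mp e2])
    rw [← pow_add] at this
    have h' : (6 * 2 ^ (s + t) : ℤ) < fibb n := by exact_mod_cast h
    linarith
  · simp at *
    omega

/-- Halving a dyadic box until it has at most one lattice point bounds the number of points. -/
lemma latBox_card (n : ℕ) (N : ℕ) : ∀ (X Y : ℤ) (s t : ℕ), s + t = N →
    (latBox n X Y s t).card * fibb n ≤ max (fibb n) (12 * 2 ^ (s + t)) := by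
  induction N with
  | zero =>
    intro X Y s t h
    have := latBox_card_le_one n X Y s t (Or.inr (by omega))
    refine le_max_of_le_left ?_
    nlinarith
  | succ N ih =>
    intro X Y s t h
    by_cases hb : 6 * 2 ^ (s + t) < fibb n
    · have := latBox_card_le_one n X Y s t (Or.inl hb)
      refine le_max_of_le_left ?_
      nlinarith
    push Not at hb
    have hN : 2 ^ (s + t) = 2 * 2 ^ N := by rw [h]; ring
    -- both halves contain at most `max 1 (6 * 2 ^ (s + t) / b_n)` points
    have fin : ∀ c c1 c2 : ℕ, c ≤ c1 + c2 → c1 * fibb n ≤ max (fibb n) (12 * 2 ^ N) →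
        c2 * fibb n ≤ max (fibb n) (12 * 2 ^ N) →
        c * fibb n ≤ max (fibb n) (12 * 2 ^ (s + t)) := by
      intro c c1 c2 hc h1 h2
      refine le_max_of_le_right ?_
      have hm : max (fibb n) (12 * 2 ^ N) = 12 * 2 ^ N := max_eq_right (by omega)
      rw [hm] at h1 h2
      have : c * fibb n ≤ (c1 + c2) * fibb n := by gcongr
      rw [add_mul] at this
      omega
    rcases s with _ | s
    · rcases t with _ | t
      · omega
      refine fin _ _ _ ?_ (by simpa [show 0 + t = N by omega] using ih X Y 0 t (by omega))
        (by simpa [show 0 + t = N by omega] using ih X (Y + 2 ^ t) 0 t (by omega))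
      refine (Finset.card_le_card ?_).trans (Finset.card_union_le _ _)
      rintro ⟨k, l⟩ hp
      simp only [latBox, Finset.mem_union, Finset.mem_filter, Finset.mem_product,
        Finset.mem_Ico, pow_succ] at hp ⊢
      have := lt_or_ge l (Y + 2 ^ t)
      rcases this with h | h
      · left; exact ⟨⟨hp.1.1, hp.1.2.1, h⟩, hp.2⟩
      · right; exact ⟨⟨hp.1.1, h, by linarith [hp.1.2.2]⟩, hp.2⟩
    · refine fin _ _ _ ?_ (by simpa [show s + t = N by omega] using ih X Y s t (by omega))
        (by simpa [show s + t = N by omega] using ih (X + 2 ^ s) Y s t (by omega))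
      refine (Finset.card_le_card ?_).trans (Finset.card_union_le _ _)
      rintro ⟨k, l⟩ hp
      simp only [latBox, Finset.mem_union, Finset.mem_filter, Finset.mem_product,
        Finset.mem_Ico, pow_succ] at hp ⊢
      have := lt_or_ge k (X + 2 ^ s)
      rcases this with h | h
      · left; exact ⟨⟨⟨hp.1.1.1, h⟩, hp.1.2⟩, hp.2⟩
      · right; exact ⟨⟨⟨h, by linarith [hp.1.1.2]⟩, hp.1.2⟩, hp.2⟩

/-- The nonzero points of the dual Fibonacci lattice. -/
def dualPts (n : ℕ) : Set (ℤ × ℤ) :=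
  {p | (fibb n : ℤ) ∣ p.1 + p.2 * fibb (n - 1) ∧ p ≠ 0}

/-- The lattice points `p ≠ 0` with `|p.1| ≤ 2^s`, `|p.2| ≤ 2^t` number at most
`192 · 2^(s+t) / b_n`, and there are none if `6 · 2^(s+t) < b_n`. -/
lemma exists_cover (n s t : ℕ) : ∃ S : Finset (ℤ × ℤ),
    (∀ p ∈ dualPts n, |p.1| ≤ 2 ^ s → |p.2| ≤ 2 ^ t → p ∈ S) ∧
    S.card * fibb n ≤ if fibb n ≤ 6 * 2 ^ (s + t) then 192 * 2 ^ (s + t) else 0 := by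
  by_cases h : fibb n ≤ 6 * 2 ^ (s + t)
  · refine ⟨latBox n (-2 ^ s) (-2 ^ t) (s + 2) (t + 2), ?_, ?_⟩
    · rintro ⟨k, l⟩ hp hk hl
      simp only [abs_le] at hk hl
      have e1 : (0 : ℤ) < 2 ^ s := by positivity
      have e2 : (0 : ℤ) < 2 ^ t := by positivity
      simp only [latBox, Finset.mem_filter, Finset.mem_product, Finset.mem_Ico, pow_add]
      exact ⟨⟨⟨hk.1, by linarith⟩, hl.1, by linarith⟩, hp.1⟩
    · rw [if_pos h]
      refine (latBox_card n _ _ _ _ _ rfl).trans (max_le (by omega) ?_)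
      rw [show s + 2 + (t + 2) = s + t + 4 by ring, pow_add]
      omega
  · refine ⟨∅, ?_, by simp⟩
    rintro ⟨k, l⟩ hp hk hl
    exfalso
    have := lattice_gap n (one_le_pow₀ (by norm_num)) (one_le_pow₀ (by norm_num)) hk hl hp.1
      (by rintro ⟨e1, e2⟩; apply hp.2; simp at e1 e2; simp [e1, e2])
    rw [← pow_add] at this
    exact h (by exact_mod_cast this)

/-! ### Fourier series of the hat function -/

/-- The `k`-th Fourier coefficient of `u • hatPer u`. The value at `k = 0` is `u ^ 2`, the second
summand being `0 / 0 = 0` there. -/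
noncomputable def hatCoef (u : ℝ) (k : ℤ) : ℝ :=
  (if k = 0 then u ^ 2 else 0) + (1 - Real.cos (2 * Real.pi * k * u)) / (2 * Real.pi ^ 2 * k ^ 2)

lemma hatCoef_zero (u : ℝ) : hatCoef u 0 = u ^ 2 := by simp [hatCoef]

lemma hatCoef_nonneg (u : ℝ) (k : ℤ) : 0 ≤ hatCoef u k := by
  unfold hatCoef
  have : 0 ≤ 1 - Real.cos (2 * Real.pi * k * u) := by
    linarith [Real.cos_le_one (2 * Real.pi * k * u)]
  split_ifs <;> positivity

lemma hatCoef_le_sq (u : ℝ) (k : ℤ) : hatCoef u k ≤ u ^ 2 := by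
  by_cases hk : k = 0
  · subst hk; rw [hatCoef_zero]
  · have hk' : (k : ℝ) ≠ 0 := by exact_mod_cast hk
    simp only [hatCoef, hk, if_false, zero_add]
    rw [div_le_iff₀ (by positivity)]
    have := Real.one_sub_sq_div_two_le_cos (x := 2 * Real.pi * k * u)
    nlinarith

lemma hatCoef_mul_sq_le (u : ℝ) {k : ℤ} (hk : k ≠ 0) : hatCoef u k * (k : ℝ) ^ 2 ≤ 1 := by
  have hk' : (k : ℝ) ≠ 0 := by exact_mod_cast hk
  simp only [hatCoef, hk, if_false, zero_add]
  have : (1 - Real.cos (2 * Real.pi * k * u)) / (2 * Real.pi ^ 2 * k ^ 2) * (k : ℝ) ^ 2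
      = (1 - Real.cos (2 * Real.pi * k * u)) / (2 * Real.pi ^ 2) := by field_simp
  rw [this, div_le_one (by positivity)]
  nlinarith [Real.neg_one_le_cos (2 * Real.pi * k * u), Real.pi_gt_three]

/-- The character `x ↦ e^{2πikx}`. -/
noncomputable def chr (k : ℤ) (x : ℝ) : ℂ := Complex.exp (2 * Real.pi * Complex.I * k * x)

lemma norm_chr (k : ℤ) (x : ℝ) : ‖chr k x‖ = 1 := by
  have : (2 * Real.pi * Complex.I * k * x : ℂ) = ((2 * Real.pi * k * x : ℝ) : ℂ) * Complex.I := by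
    push_cast; ring
  rw [chr, this, Complex.norm_exp_ofReal_mul_I]

lemma chr_add (k : ℤ) (x y : ℝ) : chr k (x + y) = chr k x * chr k y := by
  rw [chr, chr, chr, ← Complex.exp_add]; congr 1; push_cast; ring

/-- The `1`-periodic second Bernoulli function. -/
noncomputable def perB (t : ℝ) : ℝ := bernoulliFun 2 (Int.fract t)

lemma hasSum_perB (t : ℝ) :
    HasSum (fun k : ℤ => 1 / (k : ℂ) ^ 2 * chr k t) ((2 * Real.pi ^ 2 * perB t : ℝ) : ℂ) := by
  have h := hasSum_one_div_pow_mul_fourier_mul_bernoulliFun (k := 2) le_rfl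
    (x := Int.fract t) ⟨Int.fract_nonneg t, (Int.fract_lt_one t).le⟩
  convert h using 1
  · ext k
    congr 1
    rw [fourier_coe_apply, chr, Complex.exp_eq_exp_iff_exists_int]
    refine ⟨k * ⌊t⌋, ?_⟩
    have : (t : ℂ) = ((Int.fract t : ℝ) : ℂ) + ((⌊t⌋ : ℤ) : ℂ) := by
      rw [Int.fract]; push_cast; ring
    rw [this]; push_cast; ring
  · rw [perB]
    push_cast
    rw [mul_pow, mul_pow, Complex.I_sq]
    simp only [Nat.factorial, Nat.succ_eq_add_one]
    push_cast
    ring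

lemma perB_add_intCast (t : ℝ) (m : ℤ) : perB (t + m) = perB t := by
  simp [perB]

lemma perB_eq {x : ℝ} (h : |x| ≤ 1) : perB x = x ^ 2 - |x| + 6⁻¹ := by
  have base : ∀ y : ℝ, 0 ≤ y → y ≤ 1 → perB y = y ^ 2 - y + 6⁻¹ := by
    intro y h0 h1
    rcases h1.eq_or_lt with rfl | h1
    · simp [perB, bernoulliFun_two]
    · rw [perB, Int.fract_eq_self.mpr ⟨h0, h1⟩, bernoulliFun_two]
  rw [abs_le] at h
  rcases le_total 0 x with h0 | h0
  · rw [abs_of_nonneg h0, base x h0 h.2]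
  · have := perB_add_intCast x 1
    push_cast at this
    rw [abs_of_nonpos h0, ← this, base _ (by linarith) (by linarith)]
    ring

/-- The scaled hat function is a second difference of the periodic Bernoulli function. -/
lemma hatPer_eq_perB {u : ℝ} (h0 : 0 < u) (h1 : u ≤ 1 / 2) (t : ℝ) :
    u * hatPer u t = u ^ 2 + perB t - (perB (t + u) + perB (t - u)) / 2 := by
  have hd : |t - round t| ≤ 1 / 2 := abs_sub_round t
  have e1 : perB t = perB (t - round t) := by
    rw [← perB_add_intCast (t - round t) (round t)]; congr 1; ring
  have e2 : perB (t + u) = perB (t - round t + u) := by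
    rw [← perB_add_intCast (t - round t + u) (round t)]; congr 1; ring
  have e3 : perB (t - u) = perB (t - round t - u) := by
    rw [← perB_add_intCast (t - round t - u) (round t)]; congr 1; ring
  rw [hatPer, e1, e2, e3]
  generalize t - round t = d at *
  have hd' := abs_le.mp hd
  rw [perB_eq (by linarith), perB_eq (by rw [abs_le]; constructor <;> linarith),
    perB_eq (by rw [abs_le]; constructor <;> linarith)]
  split_ifs with h
  · have := abs_le.mp h
    rw [abs_of_nonneg (by linarith : 0 ≤ d + u), abs_of_nonpos (by linarith : d - u ≤ 0)]
    field_simp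
    ring
  · push Not at h
    rcases lt_abs.mp h with h | h
    · rw [abs_of_nonneg (by linarith : 0 ≤ d + u), abs_of_nonneg (by linarith : 0 ≤ d - u),
        abs_of_nonneg (by linarith : 0 ≤ d)]
      ring
    · rw [abs_of_nonpos (by linarith : d + u ≤ 0), abs_of_nonpos (by linarith : d - u ≤ 0),
        abs_of_nonpos (by linarith : d ≤ 0)]
      ring

lemma hasSum_hat {u : ℝ} (h0 : 0 < u) (h1 : u ≤ 1 / 2) (t : ℝ) :
    HasSum (fun k : ℤ => (hatCoef u k : ℂ) * chr k t) ((u * hatPer u t : ℝ) : ℂ) := by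
  have hpi : (Real.pi : ℂ) ≠ 0 := by exact_mod_cast Real.pi_ne_zero
  have A := hasSum_perB t
  have B := (hasSum_perB (t + u)).add (hasSum_perB (t - u))
  have D := hasSum_ite_eq (0 : ℤ) ((u : ℂ) ^ 2)
  have E := D.add ((A.mul_left (1 / (2 * (Real.pi : ℂ) ^ 2))).sub
    (B.mul_left (1 / (4 * (Real.pi : ℂ) ^ 2))))
  convert E using 1
  · ext k
    have hcos : chr k (t + u) + chr k (t - u) = 2 * Real.cos (2 * Real.pi * k * u) * chr k t := by
      rw [sub_eq_add_neg, chr_add, chr_add, ← mul_add, Complex.ofReal_cos, Complex.two_cos,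
        mul_comm]
      congr 1
      simp only [chr]
      congr 2 <;> push_cast <;> ring
    rw [← mul_add, hcos, hatCoef]
    by_cases hk : k = 0
    · subst hk; simp [chr]
    · have : (k : ℂ) ≠ 0 := by exact_mod_cast hk
      simp only [hk, if_false]
      push_cast
      field_simp
      ring
  · rw [hatPer_eq_perB h0 h1]
    push_cast
    field_simp
    ring

lemma hatPer_sub_intCast (u t : ℝ) (m : ℤ) : hatPer u (t - m) = hatPer u t := by
  simp [hatPer, round_sub_intCast]

lemma hatPer_eq_max {u x : ℝ} (h0 : 0 < u) (h1 : u ≤ 1 / 2) (hx : |x| ≤ 1 / 2) :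
    hatPer u x = max 0 (1 - |x| / u) := by
  have key : |x - round x| = |x| := by
    rw [abs_sub_round_eq_min]
    rcases le_total 0 x with h | h
    · rw [abs_of_nonneg h] at hx ⊢
      rw [Int.fract_eq_self.mpr ⟨h, by linarith⟩, min_eq_left (by linarith)]
    · rw [abs_of_nonpos h] at hx ⊢
      rcases h.eq_or_lt with rfl | h
      · simp
      have : Int.fract x = x + 1 := by
        rw [Int.fract_eq_iff]
        exact ⟨by linarith, by linarith, -1, by simp⟩
      rw [this, min_eq_right (by linarith)]; ring
  rw [hatPer, key]
  split_ifs with h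
  · rw [max_eq_right]; rw [sub_nonneg, div_le_one h0]; exact h
  · rw [max_eq_left]; rw [sub_nonpos, one_le_div h0]; linarith

lemma integral_hatPer {u : ℝ} (h0 : 0 < u) (h1 : u ≤ 1 / 2) (x0 : ℝ) :
    ∫ x in (0 : ℝ)..1, hatPer u (x - x0) = u := by
  have hper : Function.Periodic (hatPer u) 1 := by
    intro t
    have := hatPer_sub_intCast u (t + 1) 1
    simpa using this.symm
  have hc : Continuous fun x : ℝ => max 0 (1 - |x| / u) := by fun_prop
  have hi : ∀ a b, IntervalIntegrable (fun x : ℝ => max 0 (1 - |x| / u)) MeasureTheory.volume a b :=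
    fun a b => hc.intervalIntegrable a b
  rw [intervalIntegral.integral_comp_sub_right, show (1 : ℝ) - x0 = (0 - x0) + 1 by ring,
    hper.intervalIntegral_add_eq (0 - x0) (-(1 / 2)), show -(1 / 2 : ℝ) + 1 = 1 / 2 by norm_num]
  rw [intervalIntegral.integral_congr (g := fun x : ℝ => max 0 (1 - |x| / u))]
  swap
  · intro x hx
    rw [Set.uIcc_of_le (by norm_num)] at hx
    exact hatPer_eq_max h0 h1 (abs_le.mpr hx)
  have half : ∫ x in (0 : ℝ)..(1 / 2), max 0 (1 - |x| / u) = u / 2 := by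
    rw [← intervalIntegral.integral_add_adjacent_intervals (hi 0 u) (hi u (1 / 2))]
    rw [intervalIntegral.integral_congr (a := u) (b := 1 / 2) (g := fun _ : ℝ => (0 : ℝ))]
    swap
    · intro x hx
      rw [Set.uIcc_of_le h1] at hx
      have : 1 ≤ |x| / u := by rw [one_le_div h0]; exact hx.1.trans (le_abs_self x)
      simp only
      rw [max_eq_left]; linarith
    rw [intervalIntegral.integral_congr (a := 0) (b := u) (g := fun x : ℝ => 1 - x / u)]
    swap
    · intro x hx
      rw [Set.uIcc_of_le h0.le] at hx
      have : x / u ≤ 1 := by rw [div_le_one h0]; exact hx.2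
      simp only
      rw [abs_of_nonneg hx.1, max_eq_right]; linarith
    rw [intervalIntegral.integral_sub (by simp) (Continuous.intervalIntegrable (by fun_prop) _ _)]
    simp only [intervalIntegral.integral_div, integral_id, intervalIntegral.integral_const]
    simp; field_simp; ring
  rw [← intervalIntegral.integral_add_adjacent_intervals (hi _ 0) (hi 0 _), half]
  have := intervalIntegral.integral_comp_neg (a := 0) (b := 1 / 2)
    (fun x : ℝ => max 0 (1 - |x| / u))
  simp only [abs_neg, neg_zero] at this
  rw [← this, half]; ring

/-! ### The cubature error as a sum over the dual lattice -/

lemma chr_sum (b : ℕ) (hb : 0 < b) (a k l : ℤ) (h : ¬ (b : ℤ) ∣ k + l * a) :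
    ∑ μ ∈ Finset.Icc 1 b, chr k ((μ : ℝ) / b) * chr l (μ * a / b) = 0 := by
  have hb' : (b : ℂ) ≠ 0 := by exact_mod_cast hb.ne'
  set z : ℂ := Complex.exp (2 * Real.pi * Complex.I * (k + l * a) / b) with hz
  have h1 : ∀ μ : ℕ, chr k ((μ : ℝ) / b) * chr l (μ * a / b) = z ^ μ := by
    intro μ
    rw [chr, chr, ← Complex.exp_add, hz, ← Complex.exp_nat_mul]
    congr 1; push_cast; field_simp
  simp_rw [h1]
  have hz1 : z ≠ 1 := by
    intro e
    rw [hz, Complex.exp_eq_one_iff] at e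
    obtain ⟨m, hm⟩ := e
    apply h
    refine ⟨m, ?_⟩
    have hpi : (Real.pi : ℂ) ≠ 0 := by exact_mod_cast Real.pi_ne_zero
    have hI := Complex.I_ne_zero
    field_simp at hm
    have : ((k + l * a : ℤ) : ℂ) = ((b * m : ℤ) : ℂ) := by push_cast; linear_combination hm
    exact_mod_cast this
  have hzb : z ^ b = 1 := by
    rw [hz, ← Complex.exp_nat_mul, Complex.exp_eq_one_iff]
    refine ⟨k + l * a, ?_⟩
    push_cast; field_simp
  have : ∑ μ ∈ Finset.Icc 1 b, z ^ μ = z * ∑ μ ∈ Finset.range b, z ^ μ := by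
    rw [Finset.mul_sum, ← Finset.Ico_add_one_right_eq_Icc, Finset.sum_Ico_eq_sum_range]
    refine Finset.sum_congr (by simp) fun i _ => ?_
    rw [pow_add, pow_one]
  rw [this, geom_sum_eq hz1, hzb]; simp

lemma hasSum_prod {f g : ℤ → ℂ} {a b : ℂ} (hf : HasSum f a) (hg : HasSum g b) :
    HasSum (fun p : ℤ × ℤ => f p.1 * g p.2) (a * b) :=
  hf.mul hg (summable_mul_of_summable_norm (f := f) (g := g) hf.summable.norm hg.summable.norm)

open Classical in
/-- The cubature error, with `(u₁u₂)²` for the integral, is at most the sum of the products of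
Fourier coefficients over the nonzero points of the dual lattice. -/
lemma error_le {n : ℕ} {u1 u2 : ℝ} (h1 : 0 < u1) (h1' : u1 ≤ 1 / 2) (h2 : 0 < u2)
    (h2' : u2 ≤ 1 / 2) (x01 x02 : ℝ) :
    Summable (fun p : ℤ × ℤ => if p ∈ dualPts n then hatCoef u1 p.1 * hatCoef u2 p.2 else 0) ∧
    |((fibb n : ℝ))⁻¹ * (∑ μ ∈ Finset.Icc 1 (fibb n),
        hatBoxPer x01 x02 u1 u2 ((μ : ℝ) / (fibb n : ℝ))
          (Int.fract ((μ : ℝ) * (fibb (n - 1) : ℝ) / (fibb n : ℝ)))) - (u1 * u2) ^ 2| ≤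
      ∑' p : ℤ × ℤ, if p ∈ dualPts n then hatCoef u1 p.1 * hatCoef u2 p.2 else 0 := by
  have hb : (0 : ℝ) < fibb n := by exact_mod_cast fibb_pos n
  have norm_term : ∀ u k t, ‖(hatCoef u k : ℂ) * chr k t‖ = hatCoef u k := by
    intro u k t
    rw [norm_mul, norm_chr, mul_one, Complex.norm_real, Real.norm_of_nonneg (hatCoef_nonneg u k)]
  have sumC : ∀ u, 0 < u → u ≤ 1 / 2 → Summable (hatCoef u) := by
    intro u h h'
    have := (hasSum_hat h h' 0).summable.norm
    simpa only [norm_term] using this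
  have sumP : Summable fun p : ℤ × ℤ => hatCoef u1 p.1 * hatCoef u2 p.2 :=
    (sumC u1 h1 h1').mul_of_nonneg (sumC u2 h2 h2') (hatCoef_nonneg u1) (hatCoef_nonneg u2)
  have sumD : Summable
      (fun p : ℤ × ℤ => if p ∈ dualPts n then hatCoef u1 p.1 * hatCoef u2 p.2 else 0) := by
    refine sumP.of_nonneg_of_le (fun p => ?_) (fun p => ?_)
    all_goals
      have := mul_nonneg (hatCoef_nonneg u1 p.1) (hatCoef_nonneg u2 p.2)
      split_ifs <;> linarith
  refine ⟨sumD, ?_⟩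
  have hs : ∀ μ : ℕ, HasSum (fun p : ℤ × ℤ =>
      ((hatCoef u1 p.1 : ℂ) * chr p.1 ((μ : ℝ) / fibb n - x01)) *
        ((hatCoef u2 p.2 : ℂ) * chr p.2 ((μ : ℝ) * ((fibb (n - 1) : ℤ) : ℝ) / fibb n - x02)))
      ((hatBoxPer x01 x02 u1 u2 ((μ : ℝ) / (fibb n : ℝ))
          (Int.fract ((μ : ℝ) * (fibb (n - 1) : ℝ) / (fibb n : ℝ))) : ℝ) : ℂ) := by
    intro μ
    have A := hasSum_hat h1 h1' ((μ : ℝ) / fibb n - x01)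
    have B := hasSum_hat h2 h2' ((μ : ℝ) * ((fibb (n - 1) : ℤ) : ℝ) / fibb n - x02)
    have P := hasSum_prod A B
    convert P using 1
    rw [← Complex.ofReal_mul, hatBoxPer, Int.fract, sub_right_comm, hatPer_sub_intCast]
    push_cast
    ring
  have hS := hasSum_sum (s := Finset.Icc 1 (fibb n)) (fun μ _ => hs μ)
  have hI := hasSum_ite_eq (0 : ℤ × ℤ) (((fibb n : ℝ) * (u1 * u2) ^ 2 : ℝ) : ℂ)
  have hD := hS.sub hI
  have hN := hD.norm_le_of_bounded (sumD.hasSum.mul_left (fibb n : ℝ)) ?_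
  · rw [← Complex.ofReal_sum, ← Complex.ofReal_sub, Complex.norm_real, Real.norm_eq_abs] at hN
    rw [← mul_le_mul_iff_right₀ hb]
    refine le_trans (le_of_eq ?_) hN
    rw [← abs_of_pos hb, ← abs_mul, abs_of_pos hb]
    congr 1
    rw [mul_sub, mul_inv_cancel_left₀ hb.ne']
  · rintro ⟨k, l⟩
    have hfac : ∀ μ : ℕ, ((hatCoef u1 k : ℂ) * chr k ((μ : ℝ) / fibb n - x01)) *
        ((hatCoef u2 l : ℂ) * chr l ((μ : ℝ) * ((fibb (n - 1) : ℤ) : ℝ) / fibb n - x02)) =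
        ((hatCoef u1 k : ℂ) * chr k (-x01) * (hatCoef u2 l * chr l (-x02))) *
          (chr k ((μ : ℝ) / fibb n) * chr l (μ * ((fibb (n - 1) : ℤ) : ℝ) / fibb n)) := by
      intro μ
      rw [sub_eq_add_neg, sub_eq_add_neg, chr_add, chr_add]; ring
    simp only [hfac]
    rw [← Finset.mul_sum]
    by_cases hd : (fibb n : ℤ) ∣ k + l * (fibb (n - 1) : ℤ)
    · by_cases h0 : (k, l) = 0
      · obtain ⟨rfl, rfl⟩ := Prod.mk_eq_zero.mp h0
        have : (0, 0) ∉ dualPts n := fun h => h.2 rfl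
        simp [chr, hatCoef_zero, this]
        ring
      · have : (k, l) ∈ dualPts n := ⟨hd, h0⟩
        rw [if_neg h0, sub_zero, if_pos this, norm_mul, norm_mul, norm_term, norm_term, mul_comm]
        refine mul_le_mul_of_nonneg_right ?_ (mul_nonneg (hatCoef_nonneg _ _) (hatCoef_nonneg _ _))
        refine (norm_sum_le _ _).trans ?_
        simp [norm_chr]
    · rw [chr_sum _ (fibb_pos n) _ _ _ hd]
      have h0 : (k, l) ≠ 0 := by
        rintro h; obtain ⟨rfl, rfl⟩ := Prod.mk_eq_zero.mp h; simp at hd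
      have : (k, l) ∉ dualPts n := fun h => hd h.1
      simp [h0, this]

/-! ### Dyadic summation -/

/-- Every frequency lies in a dyadic layer `|k| ≤ 2^s`, `s ≥ a`, on which the coefficient is at most
`4 · 4^(-s)`: the least such `s` works, by the bound `u²` if `s = a` and by `1 / k²` otherwise. -/
lemma hatCoef_dyadic {u : ℝ} {a : ℕ} (h0 : 0 < u) (hu : u ≤ 2 * (1 / 2) ^ a) (k : ℤ) :
    ∃ i : ℕ, |k| ≤ 2 ^ (a + i) ∧ hatCoef u k ≤ 4 * (1 / 4) ^ (a + i) := by
  classical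
  have hex : ∃ i : ℕ, |k| ≤ 2 ^ (a + i) := by
    refine ⟨k.natAbs, ?_⟩
    rw [Int.abs_eq_natAbs]
    have : k.natAbs ≤ 2 ^ (a + k.natAbs) :=
      (Nat.lt_two_pow_self).le.trans (Nat.pow_le_pow_right (by norm_num) (by omega))
    exact_mod_cast this
  refine ⟨Nat.find hex, Nat.find_spec hex, ?_⟩
  rcases hi : Nat.find hex with _ | i
  · refine (hatCoef_le_sq u k).trans ?_
    calc u ^ 2 ≤ (2 * (1 / 2) ^ a) ^ 2 := by gcongr
      _ = 4 * (1 / 4) ^ (a + 0) := by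
        rw [mul_pow, ← pow_mul, mul_comm a 2, pow_mul]; norm_num
  · have hlt := Nat.find_min hex (m := i) (by omega)
    push Not at hlt
    have hk : k ≠ 0 := by
      rintro rfl
      have : (0 : ℤ) < 2 ^ (a + i) := by positivity
      simp at hlt; linarith
    have h1 := hatCoef_mul_sq_le u hk
    have h2 : (4 : ℝ) ^ (a + i) ≤ (k : ℝ) ^ 2 := by
      have : ((2 : ℝ) ^ (a + i)) < |(k : ℝ)| := by exact_mod_cast hlt
      rw [← sq_abs]
      calc (4 : ℝ) ^ (a + i) = ((2 : ℝ) ^ (a + i)) ^ 2 := by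
            rw [← pow_mul, mul_comm, pow_mul]; norm_num
        _ ≤ _ := by gcongr
    have h3 : hatCoef u k * 4 ^ (a + i) ≤ 1 :=
      (mul_le_mul_of_nonneg_left h2 (hatCoef_nonneg u k)).trans h1
    rw [← add_assoc, pow_succ, one_div, inv_pow]
    rw [← le_div_iff₀ (by positivity)] at h3
    refine h3.trans (le_of_eq ?_)
    rw [one_div]; ring

open ENNReal in
lemma tsum_tail (D : ℕ) :
    ∑' j : ℕ, (if D ≤ j then (2⁻¹ : ℝ≥0∞) ^ j else 0) = 2 * 2⁻¹ ^ D := by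
  induction D with
  | zero => simp [ENNReal.tsum_geometric]
  | succ D ih =>
    rw [tsum_eq_zero_add' ENNReal.summable]
    simp only [Nat.add_le_add_iff_right, pow_succ]
    have : ∀ j : ℕ, (if D ≤ j then (2⁻¹ : ℝ≥0∞) ^ j * 2⁻¹ else 0) =
        (if D ≤ j then (2⁻¹ : ℝ≥0∞) ^ j else 0) * 2⁻¹ := by intro j; split_ifs <;> simp
    simp_rw [this]
    rw [ENNReal.tsum_mul_right, ih, mul_assoc]
    simp

open ENNReal in
lemma tsum_tail_two (D : ℕ) :
    ∑' (i : ℕ) (j : ℕ), (if D ≤ i + j then (2⁻¹ : ℝ≥0∞) ^ (i + j) else 0) =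
      (4 + 2 * D) * 2⁻¹ ^ D := by
  induction D with
  | zero =>
    simp only [Nat.zero_le, if_true, pow_add, ENNReal.tsum_mul_left, ENNReal.tsum_mul_right,
      ENNReal.tsum_geometric]
    simp; norm_num
  | succ D ih =>
    rw [tsum_eq_zero_add' ENNReal.summable]
    simp only [zero_add]
    rw [tsum_tail]
    have : ∀ i j : ℕ, (if D + 1 ≤ i + 1 + j then (2⁻¹ : ℝ≥0∞) ^ (i + 1 + j) else 0) =
        (if D ≤ i + j then (2⁻¹ : ℝ≥0∞) ^ (i + j) else 0) * 2⁻¹ := by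
      intro i j
      rw [show i + 1 + j = i + j + 1 by ring]
      simp only [Nat.add_le_add_iff_right, pow_succ]
      split_ifs <;> simp
    simp_rw [this, ENNReal.tsum_mul_right]
    rw [ih, pow_succ]
    push_cast
    ring

open Classical ENNReal in
/-- Each coefficient is dominated by one dyadic layer, so exchanging the two summations reduces the
sum over the dual lattice to counting lattice points in dyadic boxes. -/
lemma dual_sum_le {n a1 a2 D : ℕ} {u1 u2 : ℝ} (h1 : 0 < u1) (h2 : 0 < u2)
    (hu1 : u1 ≤ 2 * (1 / 2) ^ a1) (hu2 : u2 ≤ 2 * (1 / 2) ^ a2)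
    (hD : ∀ m, fibb n ≤ 6 * 2 ^ (a1 + a2 + m) → D ≤ m)
    (hs : Summable (fun p : ℤ × ℤ =>
      if p ∈ dualPts n then hatCoef u1 p.1 * hatCoef u2 p.2 else 0)) :
    (∑' p : ℤ × ℤ, if p ∈ dualPts n then hatCoef u1 p.1 * hatCoef u2 p.2 else 0) ≤
      3072 * (1 / 2) ^ (a1 + a2) / fibb n * ((4 + 2 * D) * (1 / 2) ^ D) := by
  have hb : (0 : ℝ) < fibb n := by exact_mod_cast fibb_pos n
  choose S hS hcard using fun q : ℕ × ℕ => exists_cover n (a1 + q.1) (a2 + q.2)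
  set W : ℕ × ℕ → ℝ := fun q => 16 * (1 / 4) ^ (a1 + q.1 + (a2 + q.2)) with hW
  have hW0 : ∀ q, 0 ≤ W q := fun q => by positivity
  have hnn : ∀ p : ℤ × ℤ, 0 ≤ if p ∈ dualPts n then hatCoef u1 p.1 * hatCoef u2 p.2 else 0 := by
    intro p
    have := mul_nonneg (hatCoef_nonneg u1 p.1) (hatCoef_nonneg u2 p.2)
    split_ifs <;> linarith
  have step1 : ∀ p : ℤ × ℤ,
      ENNReal.ofReal (if p ∈ dualPts n then hatCoef u1 p.1 * hatCoef u2 p.2 else 0) ≤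
      ∑' q : ℕ × ℕ, if p ∈ S q then ENNReal.ofReal (W q) else 0 := by
    intro p
    split_ifs with hp
    · obtain ⟨i, hi, hi'⟩ := hatCoef_dyadic h1 hu1 p.1
      obtain ⟨j, hj, hj'⟩ := hatCoef_dyadic h2 hu2 p.2
      refine le_trans ?_ (ENNReal.le_tsum (i, j))
      rw [if_pos (hS (i, j) p hp hi hj)]
      apply ENNReal.ofReal_le_ofReal
      calc hatCoef u1 p.1 * hatCoef u2 p.2
          ≤ (4 * (1 / 4) ^ (a1 + i)) * (4 * (1 / 4) ^ (a2 + j)) :=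
            mul_le_mul hi' hj' (hatCoef_nonneg _ _) (by positivity)
        _ = W (i, j) := by simp only [hW, pow_add]; ring
    · simp
  have step2 : ∀ q : ℕ × ℕ, (∑' p : ℤ × ℤ, if p ∈ S q then ENNReal.ofReal (W q) else 0) ≤
      ENNReal.ofReal (3072 * (1 / 2) ^ (a1 + a2) / fibb n) *
        (if D ≤ q.1 + q.2 then (2⁻¹ : ℝ≥0∞) ^ (q.1 + q.2) else 0) := by
    intro q
    have e : (∑' p : ℤ × ℤ, if p ∈ S q then ENNReal.ofReal (W q) else 0) =
        (S q).card * ENNReal.ofReal (W q) := by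
      rw [tsum_eq_sum (s := S q) (fun p hp => by simp [hp])]
      simp
    rw [e]
    have hc := hcard q
    have hexp : a1 + q.1 + (a2 + q.2) = a1 + a2 + (q.1 + q.2) := by ring
    by_cases hq : D ≤ q.1 + q.2
    · have hc' : ((S q).card : ℝ) * fibb n ≤ 192 * 2 ^ (a1 + a2 + (q.1 + q.2)) := by
        rw [← hexp]
        have : (S q).card * fibb n ≤ 192 * 2 ^ (a1 + q.1 + (a2 + q.2)) := by
          refine hc.trans ?_
          split_ifs <;> omega
        exact_mod_cast this
      rw [if_pos hq, show (2⁻¹ : ℝ≥0∞) = ENNReal.ofReal (1 / 2) by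
          rw [one_div, ENNReal.ofReal_inv_of_pos (by norm_num)]; simp,
        ← ENNReal.ofReal_pow (by norm_num), ← ENNReal.ofReal_mul (by positivity),
        ← ENNReal.ofReal_natCast, ← ENNReal.ofReal_mul (by positivity)]
      apply ENNReal.ofReal_le_ofReal
      simp only [hW]
      rw [div_mul_eq_mul_div, le_div_iff₀ hb, hexp]
      have e4 : ((1 : ℝ) / 4) ^ (a1 + a2 + (q.1 + q.2)) * 2 ^ (a1 + a2 + (q.1 + q.2))
          = (1 / 2) ^ (a1 + a2) * (1 / 2) ^ (q.1 + q.2) := by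
        rw [← mul_pow, ← pow_add]; norm_num
      calc ((S q).card : ℝ) * (16 * (1 / 4) ^ (a1 + a2 + (q.1 + q.2))) * fibb n
          = 16 * (1 / 4) ^ (a1 + a2 + (q.1 + q.2)) * ((S q).card * fibb n) := by ring
        _ ≤ 16 * (1 / 4) ^ (a1 + a2 + (q.1 + q.2)) * (192 * 2 ^ (a1 + a2 + (q.1 + q.2))) := by
          gcongr
        _ = 3072 * (((1 : ℝ) / 4) ^ (a1 + a2 + (q.1 + q.2)) * 2 ^ (a1 + a2 + (q.1 + q.2))) := by
          ring
        _ = _ := by rw [e4]; ring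
    · have : ¬ fibb n ≤ 6 * 2 ^ (a1 + q.1 + (a2 + q.2)) := by
        rw [hexp]; exact fun h => hq (hD _ h)
      rw [if_neg this] at hc
      have : (S q).card = 0 := by
        have := fibb_pos n
        rcases Nat.mul_eq_zero.mp (Nat.le_zero.mp hc) with h | h <;> omega
      simp [this]
  have main : ENNReal.ofReal
      (∑' p : ℤ × ℤ, if p ∈ dualPts n then hatCoef u1 p.1 * hatCoef u2 p.2 else 0) ≤
      ENNReal.ofReal (3072 * (1 / 2) ^ (a1 + a2) / fibb n * ((4 + 2 * D) * (1 / 2) ^ D)) := by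
    rw [ENNReal.ofReal_tsum_of_nonneg hnn hs]
    calc _ ≤ ∑' p : ℤ × ℤ, ∑' q : ℕ × ℕ, (if p ∈ S q then ENNReal.ofReal (W q) else 0) :=
          ENNReal.tsum_le_tsum step1
      _ = ∑' q : ℕ × ℕ, ∑' p : ℤ × ℤ, (if p ∈ S q then ENNReal.ofReal (W q) else 0) :=
          ENNReal.tsum_comm
      _ ≤ _ := ENNReal.tsum_le_tsum step2
      _ = ENNReal.ofReal (3072 * (1 / 2) ^ (a1 + a2) / fibb n) * ((4 + 2 * D) * 2⁻¹ ^ D) := by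
          rw [ENNReal.tsum_mul_left, ENNReal.tsum_prod
            (f := fun i j => if D ≤ i + j then (2⁻¹ : ℝ≥0∞) ^ (i + j) else 0), tsum_tail_two]
      _ = _ := by
          rw [ENNReal.ofReal_mul (by positivity), ENNReal.ofReal_mul (by positivity),
            ENNReal.ofReal_pow (by norm_num), one_div, ENNReal.ofReal_inv_of_pos (by norm_num),
            ENNReal.ofReal_add (by norm_num) (by positivity), ENNReal.ofReal_mul (by norm_num)]
          simp
  exact (ENNReal.ofReal_le_ofReal_iff (by positivity)).mp main

/-- There exist absolute constants `c > 0` and `C > 0` such that for every `n` and every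
`V ≥ V₀ := c/b_n`: for every axis-parallel box `B = ∏_{j=1}^2 [x⁰_j - u_j, x⁰_j + u_j) ⊆ [0,1)²`
with `vol(B) = V`, the error of the Fibonacci cubature formula on `h_B` satisfies
`|b_n⁻¹ Σ_{μ=1}^{b_n} h_B(μ/b_n, {μ b_{n-1}/b_n}) - ∫_{[0,1]²} h_B| ≤ C log₂(2V/V₀)/b_n²`. -/
theorem fibonacci_smooth_fixed_volume_discrepancy :
    ∃ c C : ℝ, 0 < c ∧ 0 < C ∧ ∀ n : ℕ, ∀ V : ℝ, c / (fibb n : ℝ) ≤ V →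
      ∀ x01 x02 u1 u2 : ℝ, 0 < u1 → 0 < u2 →
      0 ≤ x01 - u1 → x01 + u1 ≤ 1 → 0 ≤ x02 - u2 → x02 + u2 ≤ 1 →
      4 * (u1 * u2) = V →
      |((fibb n : ℝ))⁻¹ *
          (∑ μ ∈ Finset.Icc 1 (fibb n),
            hatBoxPer x01 x02 u1 u2 ((μ : ℝ) / (fibb n : ℝ))
              (Int.fract ((μ : ℝ) * (fibb (n - 1) : ℝ) / (fibb n : ℝ)))) -
          ∫ x1 in (0 : ℝ)..1, ∫ x2 in (0 : ℝ)..1, hatBoxPer x01 x02 u1 u2 x1 x2| ≤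
        C * Real.logb 2 (2 * V / (c / (fibb n : ℝ))) / (fibb n : ℝ) ^ 2 := by
  classical
  refine ⟨1, 110592, by norm_num, by norm_num, ?_⟩
  intro n V hV x01 x02 u1 u2 h1 h2 b1 b1' b2 b2' hvol
  have hb : (0 : ℝ) < fibb n := by exact_mod_cast fibb_pos n
  have h1' : u1 ≤ 1 / 2 := by linarith
  have h2' : u2 ≤ 1 / 2 := by linarith
  have hint : ∫ x1 in (0 : ℝ)..1, ∫ x2 in (0 : ℝ)..1, hatBoxPer x01 x02 u1 u2 x1 x2
      = (u1 * u2) ^ 2 := by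
    simp only [hatBoxPer, intervalIntegral.integral_const_mul, integral_hatPer h2 h2',
      intervalIntegral.integral_mul_const, integral_hatPer h1 h1']
    ring
  rw [hint]
  obtain ⟨hs, herr⟩ := error_le (n := n) h1 h1' h2 h2' x01 x02
  refine herr.trans ?_
  -- dyadic scales `2 ^ (-a_j) ≤ u_j ≤ 2 · 2 ^ (-a_j)`
  have scale : ∀ u : ℝ, 0 < u → u ≤ 1 / 2 →
      ∃ a : ℕ, (1 / 2 : ℝ) ^ a ≤ u ∧ u ≤ 2 * (1 / 2) ^ a := by
    intro u hu hu'
    obtain ⟨a, ha, ha'⟩ := exists_nat_pow_near_of_lt_one hu (by linarith : u ≤ 1)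
      (by norm_num : (0 : ℝ) < 1 / 2) (by norm_num)
    refine ⟨a + 1, ha.le, ?_⟩
    rw [pow_succ]; linarith
  obtain ⟨a1, ha1, hu1⟩ := scale u1 h1 h1'
  obtain ⟨a2, ha2, hu2⟩ := scale u2 h2 h2'
  have hex : ∃ m : ℕ, fibb n ≤ 6 * 2 ^ (a1 + a2 + m) := by
    refine ⟨fibb n, ?_⟩
    have : fibb n < 2 ^ fibb n := Nat.lt_two_pow_self
    have : 2 ^ fibb n ≤ 2 ^ (a1 + a2 + fibb n) := Nat.pow_le_pow_right (by norm_num) (by omega)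
    omega
  have hfind : ∀ m, fibb n ≤ 6 * 2 ^ (a1 + a2 + m) → Nat.find hex ≤ m := fun m => Nat.find_min' hex
  refine (dual_sum_le h1 h2 hu1 hu2 hfind hs).trans ?_
  have hspec : (fibb n : ℝ) ≤ 6 * 2 ^ (a1 + a2 + Nat.find hex) := by
    exact_mod_cast Nat.find_spec hex
  have hmin : ∀ m, m < Nat.find hex → (6 : ℝ) * 2 ^ (a1 + a2 + m) < fibb n := by
    intro m hm
    have := Nat.find_min hex hm
    push Not at this
    exact_mod_cast this
  generalize Nat.find hex = D at *
  have hVb : 1 ≤ V * fibb n := by rwa [div_le_iff₀ hb] at hV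
  have hL : 2 * V / (1 / (fibb n : ℝ)) = 2 * (V * fibb n) := by field_simp
  rw [hL]
  set L := Real.logb 2 (2 * (V * fibb n)) with hLdef
  have hL1 : 1 ≤ L := by
    rw [hLdef, Real.le_logb_iff_rpow_le (by norm_num) (by linarith)]
    rw [Real.rpow_one]; linarith
  have hDL : (D : ℝ) ≤ L := by
    rcases D with _ | D
    · push_cast; linarith
    rw [hLdef, Real.le_logb_iff_rpow_le (by norm_num) (by linarith), Real.rpow_natCast]
    have hm := hmin D (by omega)
    have hu : (1 / 2 : ℝ) ^ (a1 + a2) ≤ u1 * u2 := by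
      rw [pow_add]; exact mul_le_mul ha1 ha2 (by positivity) h1.le
    have e : (1 / 2 : ℝ) ^ (a1 + a2) * 2 ^ (a1 + a2) = 1 := by rw [← mul_pow]; norm_num
    have : 6 * (2 : ℝ) ^ D ≤ u1 * u2 * fibb n := by
      calc 6 * (2 : ℝ) ^ D = (1 / 2 : ℝ) ^ (a1 + a2) * (6 * 2 ^ (a1 + a2 + D)) := by
            rw [pow_add 2]; linear_combination (-6 * 2 ^ D) * e
        _ ≤ u1 * u2 * fibb n := by gcongr
    rw [← hvol, pow_succ]
    have : (0 : ℝ) < 2 ^ D := by positivity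
    linarith
  have hpow : (1 / 2 : ℝ) ^ (a1 + a2) * (1 / 2) ^ D ≤ 6 / fibb n := by
    rw [← pow_add, le_div_iff₀ hb]
    have e : (1 / 2 : ℝ) ^ (a1 + a2 + D) * 2 ^ (a1 + a2 + D) = 1 := by rw [← mul_pow]; norm_num
    calc (1 / 2 : ℝ) ^ (a1 + a2 + D) * fibb n
        ≤ (1 / 2 : ℝ) ^ (a1 + a2 + D) * (6 * 2 ^ (a1 + a2 + D)) := by gcongr
      _ = 6 := by linear_combination 6 * e
  calc 3072 * (1 / 2) ^ (a1 + a2) / fibb n * ((4 + 2 * (D : ℝ)) * (1 / 2) ^ D)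
      = 3072 / fibb n * (4 + 2 * D) * ((1 / 2 : ℝ) ^ (a1 + a2) * (1 / 2) ^ D) := by ring
    _ ≤ 3072 / fibb n * (4 * L + 2 * L) * (6 / fibb n) := by gcongr; linarith
    _ = 110592 * L / fibb n ^ 2 := by field_simp; norm_num
end
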